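/- arXiv:1705.02658 — 7 statements merged into one kernel-verified Lean document; each statement's English description precedes it below -/
import Mathlib

section
/- For every numerical semigroup S of genus g, the weight satisfies W_S ≤ g(g−1)/2, and equality holds if and only if 2 ∈ S. -/
/-- A numerical semigroup: `0 ∈ S`, closed under addition, finite complement. -/
def IsNumericalSemigroup (S : Set ℕ) : Prop :=
  0 ∈ S ∧ (∀ a ∈ S, ∀ b ∈ S, a + b ∈ S) ∧ (Sᶜ : Set ℕ).Finite

/-- The genus: number of gaps. -/
noncomputable def sgGenus (T : Set ℕ) : ℕ := (Tᶜ : Set ℕ).ncard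

/-- The weight `W_T = Σ gaps − binomial(g+1,2)`, as an integer. -/
noncomputable def sgWeight (T : Set ℕ) : ℤ :=
  (∑ᶠ x ∈ (Tᶜ : Set ℕ), (x : ℤ)) - ((sgGenus T + 1).choose 2 : ℤ)

/-- The conductor: least `c` with `n ∈ S` for all `n ≥ c`. -/
noncomputable def sgConductor (S : Set ℕ) : ℕ :=
  sInf {c : ℕ | ∀ n : ℕ, c ≤ n → n ∈ S}

/-- `K(S) = {a ∈ ℕ | c − 1 − a ∉ S}`, the difference computed in `ℤ`,
no negative integer belonging to `S`. -/
def Kset (S : Set ℕ) : Set ℕ :=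
  {a : ℕ | ¬ ∃ s ∈ S, (s : ℤ) = (sgConductor S : ℤ) - 1 - (a : ℤ)}

/-- `S` is symmetric if for all `0 ≤ a ≤ c−1`, `a ∈ S ↔ c−1−a ∉ S`. -/
def IsSymmetricSgp (S : Set ℕ) : Prop :=
  ∀ a : ℕ, a < sgConductor S → (a ∈ S ↔ (sgConductor S - 1 - a) ∉ S)

/-- Summing the ranks of the elements of a finite set of naturals gives a triangular number. -/
theorem two_mul_sum_card_filter_le (G : Finset ℕ) :
    2 * ∑ x ∈ G, (G.filter (· ≤ x)).card = G.card * (G.card + 1) := by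
  induction G using Finset.induction_on_max with
  | empty => simp
  | insert a s hlt ih =>
    have ha : a ∉ s := fun h => lt_irrefl _ (hlt a h)
    have hsum : ∑ x ∈ s, ((insert a s).filter (· ≤ x)).card
        = ∑ x ∈ s, (s.filter (· ≤ x)).card :=
      Finset.sum_congr rfl fun x hx => by
        rw [Finset.filter_insert, if_neg (not_le.mpr (hlt x hx))]
    have htop : (insert a s).filter (· ≤ a) = insert a s :=
      Finset.filter_true_of_mem fun x hx => by
        rcases Finset.mem_insert.mp hx with rfl | h
        exacts [le_rfl, (hlt x h).le]
    rw [Finset.sum_insert ha, htop, hsum, Finset.card_insert_of_notMem ha, mul_add, ih]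
    ring

theorem card_filter_le_add_card_range_filter_notMem (G : Finset ℕ) (l : ℕ) :
    (G.filter (· ≤ l)).card + ((Finset.range (l + 1)).filter (· ∉ G)).card = l + 1 := by
  have h : G.filter (· ≤ l) = (Finset.range (l + 1)).filter (· ∈ G) := by
    ext x
    simp only [Finset.mem_filter, Finset.mem_range]
    grind
  rw [h, Finset.card_filter_add_card_filter_not, Finset.card_range]

/-- At least half of the integers in `[0, l]` are gaps, when `l` is a gap. -/
theorem succ_le_two_mul_card_gaps_le {G : Finset ℕ}
    (hadd : ∀ a ∉ G, ∀ b ∉ G, a + b ∉ G) {l : ℕ} (hl : l ∈ G) :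
    l + 1 ≤ 2 * (G.filter (· ≤ l)).card := by
  have hcard := card_filter_le_add_card_range_filter_notMem G l
  have hle : ((Finset.range (l + 1)).filter (· ∉ G)).card ≤ (G.filter (· ≤ l)).card := by
    refine Finset.card_le_card_of_injOn (l - ·) (fun x hx => ?_) (fun x hx y hy hxy => ?_)
    · simp only [Finset.coe_filter, Finset.mem_range, Set.mem_ofPred_eq] at hx ⊢
      refine ⟨?_, Nat.sub_le _ _⟩
      by_contra h
      exact hadd x hx.2 _ h (by rwa [Nat.add_sub_cancel' (by omega)])
    · simp only [Finset.coe_filter, Finset.mem_range, Set.mem_ofPred_eq] at hx hy hxy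
      omega
  omega

theorem even_notMem_gaps {G : Finset ℕ} (h0 : 0 ∉ G)
    (hadd : ∀ a ∉ G, ∀ b ∉ G, a + b ∉ G) (h2 : 2 ∉ G) (k : ℕ) : 2 * k ∉ G := by
  induction k with
  | zero => exact h0
  | succ k ih => exact hadd _ ih _ h2

/-- If `2` is not a gap, exactly half of the integers in `[0, l]` are gaps, when `l` is a gap. -/
theorem two_mul_card_gaps_le_eq_succ {G : Finset ℕ} (h0 : 0 ∉ G)
    (hadd : ∀ a ∉ G, ∀ b ∉ G, a + b ∉ G) (h2 : 2 ∉ G) {l : ℕ} (hl : l ∈ G) :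
    2 * (G.filter (· ≤ l)).card = l + 1 := by
  have hodd : ∀ x ∈ G, x % 2 = 1 := fun x hx => by
    by_contra h
    exact even_notMem_gaps h0 hadd h2 (x / 2) (by rwa [show 2 * (x / 2) = x by omega])
  have hcard := card_filter_le_add_card_range_filter_notMem G l
  have hge := succ_le_two_mul_card_gaps_le hadd hl
  have hle : (G.filter (· ≤ l)).card ≤ ((Finset.range (l + 1)).filter (· ∉ G)).card := by
    refine Finset.card_le_card_of_injOn (l - ·) (fun x hx => ?_) (fun x hx y hy hxy => ?_)
    · simp only [Finset.coe_filter, Finset.mem_range, Set.mem_ofPred_eq] at hx ⊢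
      refine ⟨by omega, fun h => ?_⟩
      have := hodd _ h
      have := hodd _ hx.1
      have := hodd _ hl
      omega
    · simp only [Finset.coe_filter, Set.mem_ofPred_eq] at hx hy hxy
      omega
  omega

/-- The gaps of a numerical semigroup sum to at most the square of the genus,
with equality iff `2` is not a gap. -/
theorem sum_gaps_le_sq_and_eq_iff {G : Finset ℕ} (h0 : 0 ∉ G)
    (hadd : ∀ a ∉ G, ∀ b ∉ G, a + b ∉ G) :
    ∑ x ∈ G, x ≤ G.card ^ 2 ∧ (∑ x ∈ G, x = G.card ^ 2 ↔ 2 ∉ G) := by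
  have hrank := two_mul_sum_card_filter_le G
  rw [Finset.mul_sum] at hrank
  have hsucc : ∑ x ∈ G, (x + 1) = ∑ x ∈ G, x + G.card := by
    simp [Finset.sum_add_distrib]
  have hle : ∀ x ∈ G, x + 1 ≤ 2 * (G.filter (· ≤ x)).card :=
    fun x hx => succ_le_two_mul_card_gaps_le hadd hx
  refine ⟨by nlinarith [Finset.sum_le_sum hle], fun heq h2 => ?_, fun h2 => ?_⟩
  · have h1 : 1 ∈ G := by
      by_contra h
      exact hadd 1 h 1 h h2
    have hpair : ({1, 2} : Finset ℕ) ⊆ G.filter (· ≤ 2) := by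
      intro x hx
      simp only [Finset.mem_insert, Finset.mem_singleton] at hx
      rcases hx with rfl | rfl <;> simp [h1, h2]
    have hcard : 2 ≤ (G.filter (· ≤ 2)).card := Finset.card_le_card hpair
    have hlt := Finset.sum_lt_sum hle ⟨2, h2, by omega⟩
    nlinarith
  · have heq := Finset.sum_congr rfl fun x hx => two_mul_card_gaps_le_eq_succ h0 hadd h2 hx
    nlinarith

/-- For every numerical semigroup `S` of genus `g`, the weight satisfies
`W_S ≤ g(g−1)/2`, with equality iff `2 ∈ S`. -/
theorem weight_le_max_iff_two_mem (S : Set ℕ) (hS : IsNumericalSemigroup S)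
    (g : ℕ) (hg : sgGenus S = g) :
    sgWeight S ≤ (g : ℤ) * ((g : ℤ) - 1) / 2 ∧
      (sgWeight S = (g : ℤ) * ((g : ℤ) - 1) / 2 ↔ 2 ∈ S) := by
  obtain ⟨h0, hadd, hfin⟩ := hS
  have hmem : ∀ x, x ∉ hfin.toFinset ↔ x ∈ S := fun x => by simp
  have hcard : hfin.toFinset.card = g := by
    rw [← hg, sgGenus, Set.ncard_eq_toFinset_card _ hfin]
  have hsum : ∑ᶠ x ∈ (Sᶜ : Set ℕ), (x : ℤ) = ((∑ x ∈ hfin.toFinset, x : ℕ) : ℤ) := by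
    rw [finsum_mem_eq_finite_toFinset_sum _ hfin, Nat.cast_sum]
  have key := sum_gaps_le_sq_and_eq_iff (G := hfin.toFinset) ((hmem 0).mpr h0)
    (by simpa only [hmem] using hadd)
  rw [hmem, hcard] at key
  have hchoose : (((g + 1).choose 2 : ℕ) : ℤ) + (g : ℤ) * ((g : ℤ) - 1) / 2 = (g : ℤ) ^ 2 := by
    have hdiv : (g : ℤ) * ((g : ℤ) - 1) / 2 = (g.choose 2 : ℕ) := by
      rw [Nat.choose_two_right]
      cases g <;> simp
    have hsq : (g + 1).choose 2 + g.choose 2 = g ^ 2 := by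
      rw [Nat.choose_two_right, Nat.choose_two_right, Nat.triangle_succ]
      have := Nat.div_mul_cancel (Nat.even_mul_pred_self g).two_dvd
      cases g with
      | zero => simp
      | succ n =>
        simp only [Nat.add_sub_cancel] at *
        nlinarith
    rw [hdiv]
    exact_mod_cast hsq
  rw [sgWeight, hsum, hg, ← key.2]
  generalize ∑ x ∈ hfin.toFinset, x = s at key
  zify at key ⊢
  constructor
  · linarith [key.1]
  · constructor <;> intro h <;> linarith
end

section
/- Let S be a numerical semigroup of genus g, let K = K(S), and let g′ = #(ℕ∖K). Then W_K + g′ = W_S + g. -/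
open Classical in
theorem IsNumericalSemigroup.compl_eq_filter_range {S : Set ℕ} (hS : IsNumericalSemigroup S) :
    (Sᶜ : Set ℕ) = ↑((Finset.range (sgConductor S)).filter (· ∉ S)) := by
  have hne : {c : ℕ | ∀ n : ℕ, c ≤ n → n ∈ S}.Nonempty := by
    obtain ⟨b, hb⟩ := hS.2.2.bddAbove
    refine ⟨b + 1, fun n hn => by_contra fun h => ?_⟩
    have := hb h
    omega
  have hc : ∀ n, sgConductor S ≤ n → n ∈ S := Nat.sInf_mem hne
  ext x
  simp only [Set.mem_compl_iff, Finset.coe_filter, Finset.mem_range, Set.mem_ofPred_eq]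
  exact ⟨fun h => ⟨not_le.1 fun hx => h (hc x hx), h⟩, fun h => h.2⟩

open Classical in
theorem compl_Kset_eq_image (S : Set ℕ) :
    ((Kset S)ᶜ : Set ℕ) = ↑(((Finset.range (sgConductor S)).filter (· ∈ S)).image
      (sgConductor S - 1 - ·)) := by
  ext x
  simp only [Kset, Set.mem_compl_iff, Set.mem_ofPred_eq, not_not, Finset.coe_image,
    Finset.coe_filter, Finset.mem_range, Set.mem_image]
  constructor
  · rintro ⟨s, hs, h⟩
    exact ⟨s, ⟨by omega, hs⟩, by omega⟩
  · rintro ⟨s, ⟨hlt, hs⟩, h⟩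
    exact ⟨s, hs, by omega⟩

theorem two_mul_cast_succ_choose_two (n : ℕ) :
    2 * ((n + 1).choose 2 : ℤ) = n * (n + 1) := by
  have h := Nat.add_one_mul_choose_eq n 1
  rw [Nat.choose_one_right] at h
  zify at h
  linarith

theorem sgGenus_eq_card {T : Set ℕ} {G : Finset ℕ} (h : (Tᶜ : Set ℕ) = ↑G) :
    sgGenus T = G.card := by
  rw [sgGenus, h, Set.ncard_coe_finset]

theorem two_mul_sgWeight_eq {T : Set ℕ} {G : Finset ℕ} (h : (Tᶜ : Set ℕ) = ↑G) :
    2 * sgWeight T = 2 * ∑ x ∈ G, (x : ℤ) - G.card * (G.card + 1) := by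
  rw [sgWeight, sgGenus_eq_card h, mul_sub, two_mul_cast_succ_choose_two, h,
    finsum_mem_coe_finset]

/-- `W_K + g′ = W_S + g`. -/
theorem weight_Kset_add_genus (S : Set ℕ) (hS : IsNumericalSemigroup S)
    (g g' : ℕ) (hg : sgGenus S = g) (hg' : ((Kset S)ᶜ : Set ℕ).ncard = g') :
    sgWeight (Kset S) + (g' : ℤ) = sgWeight S + (g : ℤ) := by
  classical
  change sgGenus (Kset S) = g' at hg'
  have hGc := hS.compl_eq_filter_range
  have hKc := compl_Kset_eq_image S
  have hWS := two_mul_sgWeight_eq hGc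
  have hWK := two_mul_sgWeight_eq hKc
  rw [← sgGenus_eq_card hGc, hg] at hWS
  rw [← sgGenus_eq_card hKc, hg'] at hWK
  rw [sgGenus_eq_card hGc] at hg
  rw [sgGenus_eq_card hKc] at hg'
  generalize sgConductor S = c at *
  have hinj : Set.InjOn (c - 1 - ·) (((Finset.range c).filter (· ∈ S) : Finset ℕ) : Set ℕ) := by
    intro a ha b hb h
    simp only [Finset.coe_filter, Finset.mem_range, Set.mem_ofPred_eq] at ha hb h
    omega
  rw [Finset.card_image_of_injOn hinj] at hg'
  rw [Finset.sum_image hinj] at hWK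
  have hreflect : ∑ x ∈ (Finset.range c).filter (· ∈ S), ((c - 1 - x : ℕ) : ℤ)
      = g' * (c - 1) - ∑ x ∈ (Finset.range c).filter (· ∈ S), (x : ℤ) := by
    rw [← hg', ← nsmul_eq_mul, ← Finset.sum_const, ← Finset.sum_sub_distrib]
    refine Finset.sum_congr rfl fun x hx => ?_
    have := Finset.mem_range.1 (Finset.mem_filter.1 hx).1
    omega
  have hcard := Finset.card_filter_add_card_filter_not (s := Finset.range c) (· ∈ S)
  rw [hg, hg', Finset.card_range] at hcard
  have hsum := Finset.sum_filter_add_sum_filter_not (Finset.range c) (· ∈ S) (fun x => (x : ℤ))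
  have hgauss : 2 * ∑ x ∈ Finset.range c, (x : ℤ) = c * (c - 1) := by
    clear * -
    induction c with
    | zero => simp
    | succ n ih => rw [Finset.sum_range_succ, mul_add, ih]; push_cast; ring
  rw [hreflect] at hWK
  rw [← hsum] at hgauss
  subst hcard
  push_cast at *
  linarith
end

section
/- Let g ≥ 4 and let S = {0} ∪ {n ∈ ℕ | n even and 4 ≤ n ≤ 2g−2} ∪ {2g−3} ∪ {n ∈ ℕ | n ≥ 2g}. Then S is a numerical semigroup of genus g, S is symmetric (with conductor c = 2g), and W_{K(S)} = W_S = (g² − 5g + 10)/2. -/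
/-- The gaps of the semigroup: `2` and the odd numbers below `2g` other than `2g - 3`. -/
def biellipticGaps (g : ℕ) : Finset ℕ :=
  insert 2 (((Finset.range g).image fun i => 2 * i + 1).erase (2 * g - 3))

theorem mem_biellipticGaps {g n : ℕ} :
    n ∈ biellipticGaps g ↔ n = 2 ∨ (n ≠ 2 * g - 3 ∧ n % 2 = 1 ∧ n < 2 * g) := by
  simp only [biellipticGaps, Finset.mem_insert, Finset.mem_erase, Finset.mem_image,
    Finset.mem_range]
  refine or_congr_right (and_congr_right fun _ => ⟨?_, fun h => ⟨n / 2, ?_, ?_⟩⟩)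
  · rintro ⟨i, hi, rfl⟩
    omega
  all_goals omega

theorem sum_biellipticGaps {M : Type*} [AddCommGroup M] {g : ℕ} (hg : 2 ≤ g) (f : ℕ → M) :
    ∑ x ∈ biellipticGaps g, f x
      = f 2 + (∑ i ∈ Finset.range g, f (2 * i + 1) - f (2 * g - 3)) := by
  rw [biellipticGaps, Finset.sum_insert, Finset.sum_erase_eq_sub, Finset.sum_image]
  · intro a _ b _ h
    simpa using h
  · exact Finset.mem_image.2 ⟨g - 2, Finset.mem_range.2 (by omega), by omega⟩
  · simp only [Finset.mem_erase, Finset.mem_image, not_and, not_exists]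
    intros
    omega

theorem card_biellipticGaps {g : ℕ} (hg : 2 ≤ g) : (biellipticGaps g).card = g := by
  have h := sum_biellipticGaps hg fun _ => (1 : ℤ)
  simp only [Finset.sum_const, Finset.card_range, nsmul_eq_mul, mul_one] at h
  omega

theorem sum_range_odd (g : ℕ) :
    ∑ i ∈ Finset.range g, ((2 * i + 1 : ℕ) : ℤ) = (g : ℤ) ^ 2 := by
  induction g with
  | zero => simp
  | succ k ih =>
    rw [Finset.sum_range_succ, ih]
    push_cast
    ring

theorem sgGenus_of_compl_eq {T : Set ℕ} {F : Finset ℕ} (h : Tᶜ = F) : sgGenus T = F.card := by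
  rw [sgGenus, h, Set.ncard_coe_finset]

theorem sgWeight_of_compl_eq {T : Set ℕ} {F : Finset ℕ} (h : Tᶜ = F) :
    sgWeight T = ∑ x ∈ F, (x : ℤ) - ((F.card + 1).choose 2 : ℤ) := by
  rw [sgWeight, sgGenus_of_compl_eq h, h, finsum_mem_coe_finset]

theorem sgConductor_eq_succ {S : Set ℕ} {m : ℕ} (hm : m ∉ S) (h : ∀ n, m < n → n ∈ S) :
    sgConductor S = m + 1 := by
  refine IsLeast.csInf_eq ⟨h, fun c hc => ?_⟩
  by_contra! hlt
  exact hm (hc m (by omega))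

/-- A symmetric semigroup is its own dual. -/
theorem IsSymmetricSgp.kset_eq {S : Set ℕ} (h : IsSymmetricSgp S)
    (hc : ∀ n, sgConductor S ≤ n → n ∈ S) : Kset S = S := by
  ext a
  simp only [Kset, Set.mem_ofPred_eq, not_exists, not_and]
  rcases lt_or_ge a (sgConductor S) with ha | ha
  · rw [h a ha]
    refine ⟨fun hK hs => hK _ hs (by omega), fun hn s hs hsa => hn ?_⟩
    rwa [show sgConductor S - 1 - a = s by omega]
  · exact ⟨fun _ => hc a ha, fun _ s _ hsa => by omega⟩

/-- for `g ≥ 4`, the set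
`S = {0} ∪ {even n | 4 ≤ n ≤ 2g−2} ∪ {2g−3} ∪ {n | n ≥ 2g}` is a symmetric
numerical semigroup of genus `g` with conductor `2g`, and
`W_{K(S)} = W_S = (g²−5g+10)/2`. -/
theorem symmetric_bielliptic_example (g : ℕ) (hg : 4 ≤ g) (S : Set ℕ)
    (hSdef : S = {0} ∪ {n : ℕ | Even n ∧ 4 ≤ n ∧ n ≤ 2 * g - 2} ∪ {2 * g - 3}
      ∪ {n : ℕ | 2 * g ≤ n}) :
    IsNumericalSemigroup S ∧ sgGenus S = g ∧ IsSymmetricSgp S ∧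
      sgConductor S = 2 * g ∧ sgWeight (Kset S) = sgWeight S ∧
      sgWeight S = ((g : ℤ) ^ 2 - 5 * (g : ℤ) + 10) / 2 := by
  have hmem : ∀ n, n ∈ S ↔
      n = 0 ∨ (n % 2 = 0 ∧ 4 ≤ n ∧ n ≤ 2 * g - 2) ∨ n = 2 * g - 3 ∨ 2 * g ≤ n := by
    intro n
    simp only [hSdef, Set.mem_union, Set.mem_singleton_iff, Set.mem_ofPred_eq, Nat.even_iff,
      or_assoc]
  have hcompl : Sᶜ = (biellipticGaps g : Set ℕ) := by
    ext n
    rw [Set.mem_compl_iff, hmem, Finset.mem_coe, mem_biellipticGaps]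
    omega
  have hcond : sgConductor S = 2 * g := by
    rw [sgConductor_eq_succ (m := 2 * g - 1) (by rw [hmem]; omega)
      (fun n hn => by rw [hmem]; omega)]
    omega
  have hsymm : IsSymmetricSgp S := by
    intro a ha
    rw [hcond] at ha ⊢
    rw [hmem, hmem]
    omega
  have hK : Kset S = S := hsymm.kset_eq fun n hn => by rw [hmem]; omega
  refine ⟨⟨?_, ?_, ?_⟩, ?_, hsymm, hcond, by rw [hK], ?_⟩
  · simp [hmem]
  · intro a ha b hb
    rw [hmem] at *
    omega
  · rw [hcompl]
    exact Finset.finite_toSet _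
  · rw [sgGenus_of_compl_eq hcompl, card_biellipticGaps (by omega)]
  · have hchoose : (((g + 1).choose 2 : ℕ) : ℤ) * 2 = (g + 1) * g := by
      have h := Finset.sum_range_id_mul_two (g + 1)
      rw [Finset.sum_range_id, ← Nat.choose_two_right, Nat.add_sub_cancel] at h
      exact_mod_cast h
    rw [sgWeight_of_compl_eq hcompl, card_biellipticGaps (by omega),
      sum_biellipticGaps (by omega), sum_range_odd, Nat.cast_sub (by omega)]
    push_cast
    symm
    apply Int.ediv_eq_of_eq_mul_left two_ne_zero
    linear_combination hchoose
end

section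
/- Let g ≥ 5 and let S = {0} ∪ {n ∈ ℕ | n even and 4 ≤ n ≤ 2g−4} ∪ {n ∈ ℕ | n ≥ 2g−2}. Then S is a numerical semigroup of genus g with conductor c = 2g−2 (in particular S is not symmetric), W_S = (g² − 5g + 6)/2, and W_{K(S)} = (g² − 5g + 10)/2. -/
/-- The first `m` odd numbers. -/
def oddsBelow (m : ℕ) : Finset ℕ := (Finset.range m).image fun i => 2 * i + 1

lemma mem_oddsBelow {m x : ℕ} : x ∈ oddsBelow m ↔ x % 2 = 1 ∧ x < 2 * m := by
  simp only [oddsBelow, Finset.mem_image, Finset.mem_range]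
  constructor
  · rintro ⟨i, hi, rfl⟩
    omega
  · rintro ⟨h, hx⟩
    exact ⟨x / 2, by omega, by omega⟩

lemma card_oddsBelow (m : ℕ) : (oddsBelow m).card = m := by
  rw [oddsBelow, Finset.card_image_of_injective _ fun a b h => by simpa using h,
    Finset.card_range]

lemma sum_oddsBelow (m : ℕ) : ∑ x ∈ oddsBelow m, (x : ℤ) = (m : ℤ) ^ 2 := by
  rw [oddsBelow, Finset.sum_image fun a _ b _ h => by simpa using h]
  induction m with
  | zero => simp
  | succ n ih =>
    rw [Finset.sum_range_succ, ih]
    push_cast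
    ring

lemma sgGenus_of_compl_eq_insert_oddsBelow {T : Set ℕ} {a m : ℕ} (ha : a ∉ oddsBelow m)
    (hT : Tᶜ = ↑(insert a (oddsBelow m))) : sgGenus T = m + 1 := by
  rw [sgGenus, hT, Set.ncard_coe_finset, Finset.card_insert_of_notMem ha, card_oddsBelow]

lemma two_mul_sgWeight_of_compl_eq_insert_oddsBelow {T : Set ℕ} {a m : ℕ}
    (ha : a ∉ oddsBelow m) (hT : Tᶜ = ↑(insert a (oddsBelow m))) :
    2 * sgWeight T = 2 * (a + (m : ℤ) ^ 2) - (m + 2) * (m + 1) := by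
  have hchoose : (((m + 1 + 1).choose 2 : ℕ) : ℤ) * 2 = (m + 2) * (m + 1) := by
    have h := Nat.add_one_mul_choose_eq (m + 1) 1
    rw [Nat.choose_one_right] at h
    zify at h
    linear_combination -h
  rw [sgWeight, sgGenus_of_compl_eq_insert_oddsBelow ha hT, hT, finsum_mem_coe_finset,
    Finset.sum_insert ha, sum_oddsBelow]
  linear_combination -hchoose

/-- for `g ≥ 5`, the set
`S = {0} ∪ {even n | 4 ≤ n ≤ 2g−4} ∪ {n | n ≥ 2g−2}` is a numerical semigroup of
genus `g` with conductor `2g−2` (in particular not symmetric),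
`W_S = (g²−5g+6)/2`, and `W_{K(S)} = (g²−5g+10)/2`. -/
theorem nonsymmetric_bielliptic_example (g : ℕ) (hg : 5 ≤ g) (S : Set ℕ)
    (hSdef : S = {0} ∪ {n : ℕ | Even n ∧ 4 ≤ n ∧ n ≤ 2 * g - 4}
      ∪ {n : ℕ | 2 * g - 2 ≤ n}) :
    IsNumericalSemigroup S ∧ sgGenus S = g ∧ sgConductor S = 2 * g - 2 ∧
      ¬ IsSymmetricSgp S ∧
      sgWeight S = ((g : ℤ) ^ 2 - 5 * (g : ℤ) + 6) / 2 ∧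
      sgWeight (Kset S) = ((g : ℤ) ^ 2 - 5 * (g : ℤ) + 10) / 2 := by
  have mem_S (n : ℕ) : n ∈ S ↔ n = 0 ∨ (n % 2 = 0 ∧ 4 ≤ n ∧ n ≤ 2 * g - 4) ∨ 2 * g - 2 ≤ n := by
    simp [hSdef, Nat.even_iff, or_assoc]
  have hcond : sgConductor S = 2 * g - 2 := by
    refine IsLeast.csInf_eq ⟨fun n hn => (mem_S n).2 (by omega), fun c hc => ?_⟩
    by_contra! hlt
    have := (mem_S _).1 (hc (2 * g - 3) (by omega))
    omega
  have two_notMem : 2 ∉ oddsBelow (g - 1) := by simp [mem_oddsBelow]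
  have compl_S : Sᶜ = ↑(insert 2 (oddsBelow (g - 1))) := by
    ext n
    simp only [Set.mem_compl_iff, mem_S, Finset.mem_coe, Finset.mem_insert, mem_oddsBelow]
    omega
  have last_notMem : 2 * g - 3 ∉ oddsBelow (g - 3) := by
    rw [mem_oddsBelow]
    omega
  have compl_K : (Kset S)ᶜ = ↑(insert (2 * g - 3) (oddsBelow (g - 3))) := by
    ext n
    simp only [Kset, Set.mem_compl_iff, Set.mem_ofPred_eq, not_not, hcond, Finset.mem_coe,
      Finset.mem_insert, mem_oddsBelow]
    constructor
    · rintro ⟨s, hs, h⟩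
      rw [mem_S] at hs
      omega
    · intro h
      exact ⟨2 * g - 3 - n, (mem_S _).2 (by omega), by omega⟩
  have hgenus := sgGenus_of_compl_eq_insert_oddsBelow two_notMem compl_S
  have hWS := two_mul_sgWeight_of_compl_eq_insert_oddsBelow two_notMem compl_S
  have hWK := two_mul_sgWeight_of_compl_eq_insert_oddsBelow last_notMem compl_K
  refine ⟨⟨(mem_S 0).2 (by omega), fun a ha b hb => ?_, compl_S ▸ Finset.finite_toSet _⟩,
    by omega, hcond, fun hsymm => ?_, ?_, ?_⟩
  · rw [mem_S] at ha hb ⊢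
    omega
  · have h := hsymm 2 (by omega)
    rw [hcond, mem_S, mem_S] at h
    omega
  · refine (Int.ediv_eq_of_eq_mul_right two_ne_zero ?_).symm
    rw [hWS]
    push_cast [Nat.cast_sub (show 1 ≤ g by omega)]
    ring
  · refine (Int.ediv_eq_of_eq_mul_right two_ne_zero ?_).symm
    rw [hWK]
    push_cast [Nat.cast_sub (show 3 ≤ g by omega), Nat.cast_sub (show 3 ≤ 2 * g by omega)]
    ring
end

section
/- Let S be a numerical semigroup of genus g ≥ 11 with 2 ∉ S, and let K = K(S). Then W_K = (g² − 5g + 10)/2 if and only if S is bielliptic, i.e., if and only if 4 ∈ S, 6 ∈ S, and 1, 2, 3, 5 ∉ S. -/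
open Finset in
/-- Summing a function of the rank over a finite set of naturals. -/
theorem sum_rank_eq_sum_range (f : ℕ → ℕ) (A : Finset ℕ) :
    ∑ x ∈ A, f #{y ∈ A | y ≤ x} = ∑ j ∈ range #A, f (j + 1) := by
  induction A using Finset.induction_on_max with
  | empty => simp
  | insert a s hs ih =>
    have ha : a ∉ s := fun h => lt_irrefl _ (hs a h)
    rw [sum_insert ha, card_insert_of_notMem ha, sum_range_succ, ← ih, add_comm]
    congr 1
    · refine sum_congr rfl fun x hx => ?_
      rw [filter_insert, if_neg (not_le.mpr (hs x hx))]
    · rw [filter_true_of_mem, card_insert_of_notMem ha]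
      intro y hy
      rcases mem_insert.mp hy with rfl | hy
      · exact le_rfl
      · exact (hs y hy).le

/-- The sequence `1, 2, 3, 5, 7, 9, …` of gaps of a bielliptic semigroup, indexed from `1`. -/
def biellipticGap (j : ℕ) : ℕ := if j ≤ 2 then j else 2 * j - 3

open Finset in
theorem sum_biellipticGap (k : ℕ) :
    ∑ j ∈ range (k + 2), biellipticGap (j + 1) = k ^ 2 + 2 * k + 3 := by
  induction k with
  | zero => decide
  | succ k ih =>
    rw [show k + 1 + 2 = (k + 2) + 1 by ring, sum_range_succ, ih, biellipticGap,
      if_neg (by omega), show 2 * (k + 2 + 1) - 3 = 2 * k + 3 by omega]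
    ring

open Finset in
/-- A finite part of a residue class that is closed under subtracting the modulus is an
initial segment of the class. -/
theorem exists_eq_image_range_of_sub_mem {m r : ℕ} (hm : 0 < m) (A : Finset ℕ)
    (hr : ∀ a ∈ A, ∃ i, a = m * i + r) (hA : ∀ i, m * (i + 1) + r ∈ A → m * i + r ∈ A) :
    A = (range #A).image (fun i => m * i + r) := by
  classical
  have hinj : Function.Injective (fun i => m * i + r) := fun i j h => by
    simpa [hm.ne'] using h
  suffices ∃ n, A = (range n).image (fun i => m * i + r) by
    obtain ⟨n, hn⟩ := this
    have : #A = n := by rw [hn, card_image_of_injective _ hinj, card_range]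
    rw [this]; exact hn
  have hex : ∃ n, m * n + r ∉ A := by
    obtain ⟨n, hn⟩ := Infinite.exists_notMem_finset (A.preimage _ hinj.injOn)
    exact ⟨n, by simpa using hn⟩
  have hup : ∀ k, m * (Nat.find hex + k) + r ∉ A := by
    intro k
    induction k with
    | zero => exact Nat.find_spec hex
    | succ k ih => exact fun h => ih (hA _ h)
  refine ⟨Nat.find hex, ?_⟩
  ext a
  simp only [mem_image, mem_range]
  constructor
  · intro ha
    obtain ⟨i, rfl⟩ := hr a ha
    refine ⟨i, ?_, rfl⟩
    by_contra! hlt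
    obtain ⟨k, rfl⟩ := Nat.exists_eq_add_of_le hlt
    exact hup k ha
  · rintro ⟨i, hi, rfl⟩
    exact not_not.mp (Nat.find_min hex hi)

open Finset in
/-- Twice the sum of an initial segment of a residue class. -/
theorem two_mul_sum_of_sub_mem {m r : ℕ} (hm : 0 < m) (A : Finset ℕ)
    (hr : ∀ a ∈ A, ∃ i, a = m * i + r) (hA : ∀ i, m * (i + 1) + r ∈ A → m * i + r ∈ A) :
    2 * ∑ a ∈ A, (a : ℤ) = m * (#A * (#A - 1)) + 2 * r * #A := by
  have hinj : Function.Injective (fun i => m * i + r) := fun i j h => by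
    simpa [hm.ne'] using h
  have key : ∀ n : ℕ, 2 * ∑ i ∈ range n, ((m * i + r : ℕ) : ℤ) =
      m * (n * (n - 1)) + 2 * r * n := by
    intro n
    induction n with
    | zero => simp
    | succ n ih => rw [sum_range_succ, mul_add, ih]; push_cast; ring
  rw [← key, ← sum_image (f := fun a : ℕ => (a : ℤ)) (fun i _ j _ h => hinj h),
    ← exists_eq_image_range_of_sub_mem hm A hr hA]

namespace IsNumericalSemigroup

variable {S : Set ℕ}

theorem mem_of_sgConductor_le (hS : IsNumericalSemigroup S) {n : ℕ}
    (hn : sgConductor S ≤ n) : n ∈ S := by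
  have hne : {c : ℕ | ∀ n : ℕ, c ≤ n → n ∈ S}.Nonempty := by
    obtain ⟨b, hb⟩ := hS.2.2.bddAbove
    refine ⟨b + 1, fun n hn => ?_⟩
    by_contra h
    exact absurd (hb h) (by omega)
  exact Nat.sInf_mem hne n hn

theorem notMem_of_sgConductor_eq {n : ℕ} (hS : IsNumericalSemigroup S)
    (hn : sgConductor S = n + 1) : n ∉ S := by
  intro h
  have : sgConductor S ≤ n := Nat.sInf_le fun k hk => by
    rcases hk.eq_or_lt with rfl | hk
    · exact h
    · exact hS.mem_of_sgConductor_le (by omega)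
  omega

open Finset in
/-- The weight of `K(S)` in terms of the gaps of `S`. -/
theorem two_mul_sgWeight_Kset (hS : IsNumericalSemigroup S) (Γ : Finset ℕ)
    (hΓ : ∀ n, n ∈ Γ ↔ n ∉ S) :
    2 * sgWeight (Kset S) =
      2 * ∑ x ∈ Γ, (x : ℤ) - 2 * sgConductor S + 3 * #Γ - (#Γ : ℤ) ^ 2 := by
  classical
  set c := sgConductor S with hc
  have hΓeq : Γ = {x ∈ range c | x ∉ S} := by
    ext x
    simp only [hΓ, mem_filter, mem_range, iff_and_self]
    intro hx
    by_contra! h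
    exact hx (hS.mem_of_sgConductor_le h)
  have hK : (Kset S)ᶜ = (({x ∈ range c | c - 1 - x ∈ S} : Finset ℕ) : Set ℕ) := by
    ext x
    simp only [Kset, Set.mem_compl_iff, Set.mem_ofPred_eq, not_not, coe_filter, mem_range,
      ← hc]
    constructor
    · rintro ⟨s, hs, h⟩
      refine ⟨by omega, ?_⟩
      rwa [show c - 1 - x = s by omega]
    · rintro ⟨hx, h⟩
      exact ⟨_, h, by omega⟩
  have hreflect : ∀ φ : ℕ → ℤ, ∑ x ∈ range c with c - 1 - x ∈ S, φ x =
      ∑ x ∈ range c with x ∈ S, φ (c - 1 - x) := by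
    intro φ
    rw [sum_filter, sum_filter, ← sum_range_reflect]
    refine sum_congr rfl fun x hx => ?_
    have := mem_range.mp hx
    rw [show c - 1 - (c - 1 - x) = x by omega]
  have hsplit : ∀ φ : ℕ → ℤ, ∑ x ∈ range c with x ∈ S, φ x =
      ∑ x ∈ range c, φ x - ∑ x ∈ Γ, φ x := by
    intro φ
    rw [hΓeq, ← sum_filter_add_sum_filter_not (range c) (· ∈ S) φ]
    ring
  have hcard : ((#{x ∈ range c | c - 1 - x ∈ S} : ℕ) : ℤ) = c - #Γ := by
    have := hreflect fun _ => 1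
    rw [hsplit] at this
    simpa using this
  have hsum : 2 * ∑ x ∈ range c with c - 1 - x ∈ S, (x : ℤ) =
      c * (c - 1) - 2 * (#Γ * (c - 1) - ∑ x ∈ Γ, (x : ℤ)) := by
    rw [hreflect, hsplit, sum_range_reflect (fun x : ℕ => (x : ℤ)) c, mul_sub]
    congr 1
    · have := Finset.sum_range_id_mul_two c
      rcases Nat.eq_zero_or_pos c with h0 | h0
      · simp [h0]
      · zify [h0] at this
        linarith
    · congr 1
      rw [← nsmul_eq_mul, ← sum_const, ← sum_sub_distrib]
      refine sum_congr rfl fun x hx => ?_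
      rw [hΓeq, mem_filter, mem_range] at hx
      omega
  have hchoose : ∀ n : ℕ, 2 * ((n + 1).choose 2 : ℤ) = n * (n + 1) := by
    intro n
    have h2 := Finset.sum_range_id_mul_two (n + 1)
    rw [Finset.sum_range_id, ← Nat.choose_two_right] at h2
    zify at h2
    simp at h2
    linarith
  rw [sgWeight, sgGenus, hK, finsum_mem_coe_finset, Set.ncard_coe_finset, mul_sub, hchoose,
    hsum, hcard]
  ring

open Finset in
/-- If at most `ℓ / 2 + 1` gaps are at most the gap `ℓ`, then `S` is symmetric or pseudo-symmetric
up to `ℓ`. -/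
theorem sub_mem_or_of_card_gaps_le (hS : IsNumericalSemigroup S) {Γ : Finset ℕ}
    (hΓ : ∀ n, n ∈ Γ ↔ n ∉ S) {l : ℕ} (hl : l ∉ S) (hcard : 2 * #{y ∈ Γ | y ≤ l} ≤ l + 2)
    {x : ℕ} (hxl : x ≤ l) (hx : x ∉ S) : l - x ∈ S ∨ 2 * x = l := by
  classical
  by_contra! hcon
  obtain ⟨hlx, hne⟩ := hcon
  have hgap : {y ∈ Γ | y ≤ l} = {y ∈ range (l + 1) | y ∉ S} := by
    ext y
    simp only [mem_filter, mem_range, hΓ, Nat.lt_succ_iff, and_comm]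
  have hpart := card_filter_add_card_filter_not (s := range (l + 1)) (· ∈ S)
  rw [card_range, ← hgap] at hpart
  have hinj : Set.InjOn (fun y => l - y) ({y ∈ range (l + 1) | y ∈ S} : Finset ℕ) := by
    intro a ha b hb hab
    simp only [coe_filter, mem_range, Set.mem_ofPred_eq] at ha hb hab
    omega
  have hsub : insert x (insert (l - x) ({y ∈ range (l + 1) | y ∈ S}.image fun y => l - y)) ⊆
      {y ∈ Γ | y ≤ l} := by
    intro z hz
    simp only [mem_insert, mem_image, mem_filter, mem_range] at hz
    simp only [mem_filter, hΓ]
    rcases hz with rfl | rfl | ⟨y, ⟨hy, hyS⟩, rfl⟩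
    · exact ⟨hx, hxl⟩
    · exact ⟨hlx, by omega⟩
    · refine ⟨fun h => hl ?_, by omega⟩
      rw [show l = (l - y) + y by omega]
      exact hS.2.1 _ h _ hyS
  have hle := card_le_card hsub
  rw [card_insert_of_notMem, card_insert_of_notMem, card_image_of_injOn hinj] at hle
  · omega
  · simp only [mem_image, mem_filter, mem_range, not_exists, not_and]
    rintro y ⟨hy, hyS⟩ h
    rw [show y = x by omega] at hyS
    exact hx hyS
  · simp only [mem_insert, mem_image, mem_filter, mem_range, not_or, not_exists, not_and]
    refine ⟨by omega, ?_⟩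
    rintro y ⟨hy, hyS⟩ h
    rw [show y = l - x by omega] at hyS
    exact hlx hyS

/-- A semigroup of multiplicity `m ≥ 4` which is symmetric or pseudo-symmetric up to a gap
`l ≥ 3` that is not the largest one has `l = 2 * m - 2`. -/
theorem eq_two_mul_sub_two_of_sub_mem_or (hS : IsNumericalSemigroup S) {m l l' : ℕ} (hm : 4 ≤ m)
    (hmS : m ∈ S) (hmin : ∀ x, 0 < x → x < m → x ∉ S) (hl3 : 3 ≤ l)
    (hll' : l < l') (hl' : l' ∉ S)
    (hsymm : ∀ x, x ≤ l → x ∉ S → l - x ∈ S ∨ 2 * x = l) : l = 2 * m - 2 := by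
  classical
  have hex : ∃ d, 0 < d ∧ l + d ∉ S := ⟨l' - l, by omega, by rwa [Nat.add_sub_cancel' hll'.le]⟩
  obtain ⟨d, ⟨hd, hdS⟩, hdmin⟩ : ∃ d, (0 < d ∧ l + d ∉ S) ∧ ∀ e < d, ¬ (0 < e ∧ l + e ∉ S) :=
    ⟨Nat.find hex, Nat.find_spec hex, fun _ => Nat.find_min hex⟩
  have hdm : d ≤ m := by
    by_contra! h
    refine hdmin (d - m) (by omega) ⟨by omega, fun h' => hdS ?_⟩
    rw [show l + d = l + (d - m) + m by omega]
    exact hS.2.1 _ h' _ hmS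
  have h1 : 1 ∉ S := hmin 1 (by omega) (by omega)
  have h2 : 2 ∉ S := hmin 2 (by omega) (by omega)
  have h3 : 3 ∉ S := hmin 3 (by omega) (by omega)
  have hl1 : l - 1 ∈ S := (hsymm 1 (by omega) h1).resolve_right (by omega)
  have hml : m < l := by
    by_contra! h
    exact hmin (l - 1) (by omega) (by omega) hl1
  have hl2 : l - 2 ∈ S := (hsymm 2 (by omega) h2).resolve_right (by omega)
  have hsub : ∀ a ∈ S, d ≤ a → a ≤ l → a - d ∈ S ∨ 2 * (a - d) = l := by
    intro a ha hda hal
    have hx : l - (a - d) ∉ S := fun h => hdS <| by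
      rw [show l + d = (l - (a - d)) + a by omega]
      exact hS.2.1 _ h _ ha
    have := hsymm _ (by omega) hx
    rw [show l - (l - (a - d)) = a - d by omega] at this
    exact this.imp_right (by omega)
  rcases hdm.eq_or_lt with rfl | hdm
  · exfalso
    have hclass : ∀ a, a ∈ S → a ≤ l → (∃ k, a = d * k) ∨ ∃ k, 2 * a = l + 2 * (d * k) := by
      intro a
      induction a using Nat.strong_induction_on with
      | _ a ih =>
        intro ha hal
        rcases Nat.eq_zero_or_pos a with rfl | hpos
        · exact Or.inl ⟨0, by simp⟩
        have hda : d ≤ a := by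
          by_contra! h
          exact hmin a hpos h ha
        rcases hsub a ha hda hal with h | h
        · rcases ih _ (by omega) h (by omega) with ⟨k, hk⟩ | ⟨k, hk⟩
          · exact Or.inl ⟨k + 1, by rw [mul_add]; omega⟩
          · exact Or.inr ⟨k + 1, by rw [mul_add]; omega⟩
        · exact Or.inr ⟨1, by omega⟩
    have hl3 : l - 3 ∈ S := by
      refine (hsymm 3 (by omega) h3).resolve_right fun h => ?_
      have := hsub (l - 1) hl1 (by omega) (by omega)
      have hd4 : d = 4 := by
        by_contra hne
        exact hmin (l - 2) (by omega) (by omega) hl2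
      rw [show l - 1 - d = 1 by omega] at this
      exact this.elim h1 (by omega)
    have hne : ∀ j k : ℕ, d * j = d * k + 1 ∨ d * j = d * k + 2 → False := by
      intro j k h
      rcases lt_or_ge k j with hkj | hkj
      · have := Nat.mul_le_mul_left d (Nat.succ_le_of_lt hkj)
        rw [Nat.mul_succ] at this
        omega
      · have := Nat.mul_le_mul_left d hkj
        omega
    rcases hclass _ hl1 (by omega) with ⟨i, hi⟩ | ⟨i, hi⟩ <;>
    rcases hclass _ hl2 (by omega) with ⟨j, hj⟩ | ⟨j, hj⟩ <;>
    rcases hclass _ hl3 (by omega) with ⟨k, hk⟩ | ⟨k, hk⟩ <;>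
    first
    | exact hne i j (by omega)
    | exact hne i k (by omega)
    | exact hne j k (by omega)
  · have hl_eq : 2 * (m - d) = l := (hsub m hmS hdm.le hml.le).resolve_left
      (hmin _ (by omega) (by omega))
    have := (hsymm (m - 1) (by omega) (hmin _ (by omega) (by omega))).resolve_left
      (hmin _ (by omega) (by omega))
    omega

open Finset in
/-- If `m ≥ 4` is the multiplicity and `S` is pseudo-symmetric up to the gap `2 * m - 2`, there
are few gaps, and their sum without the largest one is small. -/
theorem sum_erase_lt_of_pseudosymmetric (hS : IsNumericalSemigroup S) {Γ : Finset ℕ}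
    (hΓ : ∀ n, n ∈ Γ ↔ n ∉ S) {F : ℕ} (hF : F ∈ Γ)
    (hcard : 11 ≤ #Γ) {m : ℕ} (hm : 4 ≤ m) (hmS : m ∈ S) (hl : 2 * m - 2 < F)
    (hsymm : ∀ x, x ≤ 2 * m - 2 → x ∉ S → 2 * m - 2 - x ∈ S ∨ 2 * x = 2 * m - 2)
    (hmin : ∀ x, 0 < x → x < m → x ∉ S) :
    ∑ x ∈ Γ.erase F, x + 4 * #Γ < #Γ ^ 2 + 6 := by
  classical
  have hblock : ∀ x, m ≤ x → x ≤ 2 * m - 3 → x ∈ S := by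
    intro x hmx hx
    have := (hsymm (2 * m - 2 - x) (by omega) (hmin _ (by omega) (by omega))).resolve_right
      (by omega)
    rwa [show 2 * m - 2 - (2 * m - 2 - x) = x by omega] at this
  rcases hm.eq_or_lt with rfl | hm
  · exfalso
    have h5 : 5 ∈ S := hblock 5 (by omega) (by omega)
    have hlarge : ∀ k, 12 + k ∈ S := by
      intro k
      induction k using Nat.strong_induction_on with
      | _ k ih =>
        rcases lt_or_ge k 4 with hk | hk
        · have h8 := hS.2.1 _ hmS _ hmS
          have h9 := hS.2.1 _ hmS _ h5
          have h10 := hS.2.1 _ h5 _ h5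
          interval_cases k
          · exact hS.2.1 _ h8 _ hmS
          · exact hS.2.1 _ h9 _ hmS
          · exact hS.2.1 _ h10 _ hmS
          · exact hS.2.1 _ h10 _ h5
        · rw [show 12 + k = 12 + (k - 4) + 4 by omega]
          exact hS.2.1 _ (ih _ (by omega)) _ hmS
    have hsub : Γ ⊆ ((range 12).erase 4).erase 5 := by
      intro x hx
      have hxS := (hΓ x).mp hx
      simp only [mem_erase, mem_range]
      refine ⟨fun h => hxS (h ▸ h5), fun h => hxS (h ▸ hmS), ?_⟩
      by_contra! h
      exact hxS (by simpa [Nat.add_sub_cancel' h] using hlarge (x - 12))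
    have := card_le_card hsub
    simp at this
    omega
  · have hlarge : ∀ k, 2 * m + k ∈ S := by
      intro k
      induction k using Nat.strong_induction_on with
      | _ k ih =>
        rcases lt_or_ge k m with hk | hk
        · rcases lt_or_ge k (m - 3) with hk' | hk'
          · rw [show 2 * m + k = m + (m + k) by omega]
            exact hS.2.1 _ hmS _ (hblock _ (by omega) (by omega))
          · rw [show 2 * m + k = (2 * m - 3) + (k + 3) by omega]
            exact hS.2.1 _ (hblock _ (by omega) (by omega)) _ (hblock _ (by omega) (by omega))
        · rw [show 2 * m + k = 2 * m + (k - m) + m by omega]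
          exact hS.2.1 _ (ih _ (by omega)) _ hmS
    have hlt : ∀ x ∈ Γ, x < 2 * m := by
      intro x hx
      by_contra! h
      exact (hΓ x).mp hx (by simpa [Nat.add_sub_cancel' h] using hlarge (x - 2 * m))
    have hFeq : F = 2 * m - 1 := by have := hlt F hF; omega
    have hsub : Γ.erase F ⊆ insert (2 * m - 2) (Ico 1 m) := by
      intro x hx
      rw [mem_erase] at hx
      have hxlt := hlt x hx.2
      have hxS := (hΓ x).mp hx.2
      have h0 : x ≠ 0 := fun h => hxS (h ▸ hS.1)
      have hb : ¬ (m ≤ x ∧ x ≤ 2 * m - 3) := fun h => hxS (hblock x h.1 h.2)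
      have hne := hx.1
      simp only [mem_insert, mem_Ico]
      omega
    have hsub' : Ico 1 m ⊆ (Γ.erase F) := by
      intro x hx
      rw [mem_Ico] at hx
      exact mem_erase.mpr ⟨by omega, (hΓ x).mpr (hmin x (by omega) hx.2)⟩
    have hc := card_le_card hsub
    have hc' := card_le_card hsub'
    have hs := sum_le_sum_of_subset (f := fun x : ℕ => x) hsub
    rw [card_insert_of_notMem (by simp; omega), Nat.card_Ico, card_erase_of_mem hF] at hc
    rw [Nat.card_Ico, card_erase_of_mem hF] at hc'
    rw [sum_insert (by simp; omega)] at hs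
    have hid : (∑ x ∈ Ico 1 m, x) * 2 = m * (m - 1) := by
      rw [← sum_range_id_mul_two, range_eq_Ico, sum_eq_sum_Ico_succ_bot (a := 0) (by omega),
        zero_add, zero_add]
    obtain ⟨k, rfl⟩ := Nat.exists_eq_add_of_le (show 10 ≤ m by omega)
    rw [show 10 + k - 1 = 9 + k by omega] at hid
    rw [show 2 * (10 + k) - 2 = 18 + 2 * k by omega] at hs
    obtain h | h : #Γ = 10 + k ∨ #Γ = 11 + k := by omega
    all_goals rw [h]; nlinarith

/-- If `3 ∈ S`, the sum of the gaps other than the largest one is below the bielliptic value. -/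
theorem sum_lt_of_three_mem (hS : IsNumericalSemigroup S) {Γ : Finset ℕ}
    (hΓ : ∀ n, n ∈ Γ ↔ n ∉ S) {F : ℕ} (hFmax : ∀ x ∈ Γ, x ≤ F)
    (hcard : 11 ≤ Γ.card) (h3 : 3 ∈ S) :
    ∑ x ∈ Γ, (x : ℤ) - F < (Γ.card : ℤ) ^ 2 - 4 * Γ.card + 6 := by
  classical
  have hdown : ∀ n, n + 3 ∉ S → n ∉ S := fun n h h' => h (hS.2.1 _ h' _ h3)
  have h3k : ∀ k, 3 * k ∈ S := by
    intro k
    induction k with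
    | zero => exact hS.1
    | succ k ih => exact hS.2.1 _ ih _ h3
  set A := Γ.filter (fun x => x % 3 = 1) with hA
  set B := Γ.filter (fun x => ¬ x % 3 = 1) with hB
  have hAr : ∀ a ∈ A, ∃ i, a = 3 * i + 1 := by
    intro a ha
    have := (Finset.mem_filter.mp ha).2
    exact ⟨a / 3, by omega⟩
  have hBr : ∀ a ∈ B, ∃ i, a = 3 * i + 2 := by
    intro a ha
    obtain ⟨h, h1⟩ := Finset.mem_filter.mp ha
    have h0 : a % 3 ≠ 0 := fun h0 => (hΓ a).mp h (by
      rw [show a = 3 * (a / 3) by omega]; exact h3k _)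
    exact ⟨a / 3, by omega⟩
  have hAmem : ∀ i, 3 * i + 1 ∈ A ↔ 3 * i + 1 ∉ S := by
    intro i
    rw [hA, Finset.mem_filter, hΓ, and_iff_left (by omega)]
  have hBmem : ∀ i, 3 * i + 2 ∈ B ↔ 3 * i + 2 ∉ S := by
    intro i
    rw [hB, Finset.mem_filter, hΓ, and_iff_left (by omega)]
  have hAd : ∀ i, 3 * (i + 1) + 1 ∈ A → 3 * i + 1 ∈ A := by
    intro i
    rw [hAmem, hAmem]
    exact hdown (3 * i + 1)
  have hBd : ∀ i, 3 * (i + 1) + 2 ∈ B → 3 * i + 2 ∈ B := by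
    intro i
    rw [hBmem, hBmem]
    exact hdown (3 * i + 2)
  have hsA := two_mul_sum_of_sub_mem (by norm_num) A hAr hAd
  have hsB := two_mul_sum_of_sub_mem (by norm_num) B hBr hBd
  have heA := exists_eq_image_range_of_sub_mem (by norm_num) A hAr hAd
  have heB := exists_eq_image_range_of_sub_mem (by norm_num) B hBr hBd
  have hsum : ∑ x ∈ Γ, (x : ℤ) = ∑ x ∈ A, (x : ℤ) + ∑ x ∈ B, (x : ℤ) :=
    (Finset.sum_filter_add_sum_filter_not _ _ _).symm
  have hc : Γ.card = A.card + B.card := (Finset.card_filter_add_card_filter_not _).symm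
  have hAlt : ∀ i, 3 * i + 1 ∉ S ↔ i < A.card := by
    intro i
    rw [← hAmem, heA]
    simp [Finset.card_image_of_injective _ (f := fun i => 3 * i + 1) (fun i j h => by simpa using h)]
  have hBlt : ∀ i, 3 * i + 2 ∉ S ↔ i < B.card := by
    intro i
    rw [← hBmem, heB]
    simp [Finset.card_image_of_injective _ (f := fun i => 3 * i + 2) (fun i j h => by simpa using h)]
  generalize A.card = x at *
  generalize B.card = y at *
  have hyx : y ≤ 2 * x := by
    have hx : 3 * x + 1 ∈ S := by simpa using (hAlt x).not
    by_contra! h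
    refine (hBlt (2 * x)).mpr h ?_
    rw [show 3 * (2 * x) + 2 = (3 * x + 1) + (3 * x + 1) by ring]
    exact hS.2.1 _ hx _ hx
  have hxy : x ≤ 2 * y + 1 := by
    have hy : 3 * y + 2 ∈ S := by simpa using (hBlt y).not
    by_contra! h
    refine (hAlt (2 * y + 1)).mpr h ?_
    rw [show 3 * (2 * y + 1) + 1 = (3 * y + 2) + (3 * y + 2) by ring]
    exact hS.2.1 _ hy _ hy
  have hFx : 3 * (x - 1) + 1 ≤ F := hFmax _ ((hΓ _).mpr ((hAlt _).mpr (by omega)))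
  have hFy : 3 * (y - 1) + 2 ≤ F := hFmax _ ((hΓ _).mpr ((hBlt _).mpr (by omega)))
  rw [hsum, hc]
  push_cast at *
  rcases le_or_gt x y with h | h
  · have hF' : (3 : ℤ) * y - 1 ≤ F := by omega
    have hx4 : (4 : ℤ) ≤ x := by omega
    have hg : (11 : ℤ) ≤ x + y := by omega
    have hp : (0 : ℤ) ≤ ((y : ℤ) - x) * (2 * x - y) :=
      mul_nonneg (by omega) (by omega)
    have hq : (0 : ℤ) ≤ ((x : ℤ) - 4) * (x + y - 4) := mul_nonneg (by omega) (by omega)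
    nlinarith
  · have hF' : (3 : ℤ) * x - 2 ≤ F := by omega
    have hp : (0 : ℤ) ≤ ((x : ℤ) - y) * (2 * y + 1 - x) :=
      mul_nonneg (by omega) (by omega)
    have hq : (0 : ℤ) ≤ ((y : ℤ) - 4) * (x + y - 6) := mul_nonneg (by omega) (by omega)
    nlinarith

open Finset in
/-- If neither `2` nor `3` lies in `S` and the sum of the gaps other than the largest one reaches
the bielliptic value, then these gaps are `1, 2, 3, 5, 7, 9, …`. -/
theorem eq_biellipticGap_of_le_sum (hS : IsNumericalSemigroup S) {Γ : Finset ℕ}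
    (hΓ : ∀ n, n ∈ Γ ↔ n ∉ S) {F : ℕ} (hF : F ∈ Γ) (hFmax : ∀ x ∈ Γ, x ≤ F)
    (hcard : 11 ≤ #Γ) (h2 : 2 ∉ S) (h3 : 3 ∉ S)
    (hsum : #Γ ^ 2 + 6 ≤ ∑ x ∈ Γ.erase F, x + 4 * #Γ) :
    ∀ x ∈ Γ.erase F, x = biellipticGap #{y ∈ Γ.erase F | y ≤ x} := by
  classical
  have hFS : F ∉ S := (hΓ F).mp hF
  have h1 : 1 ∉ S := fun h => h2 (hS.2.1 _ h _ h)
  obtain ⟨m, ⟨hm0, hmS⟩, hmin⟩ : ∃ m, (0 < m ∧ m ∈ S) ∧ ∀ x < m, ¬ (0 < x ∧ x ∈ S) := by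
    have hex : ∃ m, 0 < m ∧ m ∈ S :=
      ⟨sgConductor S + 1, by omega, hS.mem_of_sgConductor_le (by omega)⟩
    exact ⟨Nat.find hex, Nat.find_spec hex, fun _ => Nat.find_min hex⟩
  replace hmin : ∀ x, 0 < x → x < m → x ∉ S := fun x hx hxm h => hmin x hxm ⟨hx, h⟩
  have hm4 : 4 ≤ m := by
    by_contra! h
    interval_cases m
    exacts [h1 hmS, h2 hmS, h3 hmS]
  have hle : ∀ x ∈ Γ.erase F, x ≤ biellipticGap #{y ∈ Γ.erase F | y ≤ x} := by
    intro x hx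
    obtain ⟨hxF, hxΓ⟩ := mem_erase.mp hx
    have hxlt : x < F := lt_of_le_of_ne (hFmax x hxΓ) hxF
    have hxS := (hΓ x).mp hxΓ
    have hrank : {y ∈ Γ.erase F | y ≤ x} = {y ∈ Γ | y ≤ x} := by
      ext y
      simp only [mem_filter, mem_erase]
      constructor
      · exact fun h => ⟨h.1.2, h.2⟩
      · exact fun h => ⟨⟨by omega, h.1⟩, h.2⟩
    rw [hrank]
    rcases lt_or_ge x 3 with hx3 | hx3
    · have hsub : Icc 1 x ⊆ {y ∈ Γ | y ≤ x} := by
        intro y hy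
        rw [mem_Icc] at hy
        exact mem_filter.mpr ⟨(hΓ y).mpr (hmin y (by omega) (by omega)), hy.2⟩
      have := card_le_card hsub
      rw [Nat.card_Icc] at this
      unfold biellipticGap
      split_ifs <;> omega
    · by_contra! hlt
      have hcard' : 2 * #{y ∈ Γ | y ≤ x} ≤ x + 2 := by
        unfold biellipticGap at hlt
        split_ifs at hlt <;> omega
      have hsymm := fun y => hS.sub_mem_or_of_card_gaps_le (x := y) hΓ hxS hcard'
      obtain rfl := hS.eq_two_mul_sub_two_of_sub_mem_or hm4 hmS hmin hx3 hxlt hFS hsymm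
      have := hS.sum_erase_lt_of_pseudosymmetric hΓ hF hcard hm4 hmS hxlt hsymm hmin
      omega
  have htotal := sum_rank_eq_sum_range biellipticGap (Γ.erase F)
  obtain ⟨k, hk⟩ := Nat.exists_eq_add_of_le' (show 3 ≤ #Γ by omega)
  rw [card_erase_of_mem hF, hk, Nat.add_sub_assoc (by norm_num), sum_biellipticGap] at htotal
  refine (sum_eq_sum_iff_of_le hle).mp (le_antisymm (sum_le_sum hle) ?_)
  rw [htotal]
  rw [hk] at hsum
  nlinarith

open Finset in
/-- The sum of the gaps other than the largest one of a bielliptic semigroup. -/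
theorem sum_erase_eq_of_four_mem_six_mem (hS : IsNumericalSemigroup S) {Γ : Finset ℕ}
    (hΓ : ∀ n, n ∈ Γ ↔ n ∉ S) {F : ℕ} (hF : F ∈ Γ) (hFmax : ∀ x ∈ Γ, x ≤ F)
    (hF2 : 2 < F) (h2 : 2 ∉ S) (h4 : 4 ∈ S) (h6 : 6 ∈ S) :
    ∑ x ∈ Γ.erase F, (x : ℤ) = (#Γ : ℤ) ^ 2 - 4 * #Γ + 6 := by
  classical
  have heven : ∀ k, 2 * k + 4 ∈ S := by
    intro k
    induction k using Nat.strong_induction_on with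
    | _ k ih =>
      rcases lt_or_ge k 2 with hk | hk
      · interval_cases k
        exacts [h4, h6]
      · rw [show 2 * k + 4 = 2 * (k - 2) + 4 + 4 by omega]
        exact hS.2.1 _ (ih _ (by omega)) _ h4
  have hodd : ∀ x ∉ S, x ≠ 2 → x % 2 = 1 := by
    intro x hx hx2
    by_contra h
    rcases Nat.eq_zero_or_pos x with rfl | h0
    · exact hx hS.1
    · exact hx (by simpa [show 2 * (x / 2 - 2) + 4 = x by omega] using heven (x / 2 - 2))
  have hFS := (hΓ F).mp hF
  have hFodd := hodd F hFS (by omega)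
  have h2mem : 2 ∈ Γ.erase F := mem_erase.mpr ⟨by omega, (hΓ 2).mpr h2⟩
  have hr : ∀ a ∈ (Γ.erase F).erase 2, ∃ i, a = 2 * i + 1 := by
    intro a ha
    simp only [mem_erase, hΓ] at ha
    have := hodd a ha.2.2 ha.1
    exact ⟨a / 2, by omega⟩
  have hdown : ∀ i, 2 * (i + 1) + 1 ∈ (Γ.erase F).erase 2 →
      2 * i + 1 ∈ (Γ.erase F).erase 2 := by
    intro i hi
    simp only [mem_erase] at hi ⊢
    have := hFmax _ hi.2.2
    refine ⟨by omega, by omega, (hΓ _).mpr fun h => hFS ?_⟩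
    have hle : 2 * i + 1 + 4 ≤ F := by omega
    rw [show F = 2 * i + 1 + (2 * ((F - (2 * i + 1)) / 2 - 2) + 4) by omega]
    exact hS.2.1 _ h _ (heven _)
  have hsum := two_mul_sum_of_sub_mem (by norm_num) _ hr hdown
  have hc : #((Γ.erase F).erase 2) + 2 = #Γ := by
    rw [← card_erase_add_one hF, ← card_erase_add_one h2mem]
  rw [← sum_erase_add _ _ h2mem, ← hc]
  push_cast at hsum ⊢
  linarith

end IsNumericalSemigroup

/-- for a numerical semigroup of genus `g ≥ 11` with `2 ∉ S`,
`W_K = (g²−5g+10)/2` iff `S` is bielliptic, i.e. iff `4 ∈ S`, `6 ∈ S` and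
`1, 2, 3, 5 ∉ S`. -/
theorem weight_Kset_submaximal_iff_bielliptic (S : Set ℕ) (hS : IsNumericalSemigroup S)
    (g : ℕ) (hg : sgGenus S = g) (hgge : 11 ≤ g) (h2 : 2 ∉ S) :
    sgWeight (Kset S) = ((g : ℤ) ^ 2 - 5 * (g : ℤ) + 10) / 2 ↔
      (4 ∈ S ∧ 6 ∈ S ∧ 1 ∉ S ∧ 2 ∉ S ∧ 3 ∉ S ∧ 5 ∉ S) := by
  classical
  obtain ⟨Γ, hΓ⟩ : ∃ Γ : Finset ℕ, ∀ n, n ∈ Γ ↔ n ∉ S :=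
    ⟨hS.2.2.toFinset, fun n => by simp⟩
  have hcard : Γ.card = g := by
    rw [← hg, sgGenus, ← Set.ncard_coe_finset]
    congr 1
    ext n
    simp [hΓ]
  subst hcard
  obtain ⟨F, hc⟩ : ∃ F, sgConductor S = F + 1 := by
    refine Nat.exists_eq_succ_of_ne_zero fun h => h2 (hS.mem_of_sgConductor_le (by omega))
  have hFS := hS.notMem_of_sgConductor_eq hc
  have hF : F ∈ Γ := (hΓ F).mpr hFS
  have hFmax : ∀ x ∈ Γ, x ≤ F := by
    intro x hx
    by_contra! h
    exact (hΓ x).mp hx (hS.mem_of_sgConductor_le (by omega))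
  have hF11 : 11 ≤ F := by
    have hsub : Γ ⊆ Finset.Icc 1 F := fun x hx => Finset.mem_Icc.mpr
      ⟨Nat.pos_of_ne_zero fun h => (hΓ x).mp hx (h ▸ hS.1), hFmax x hx⟩
    have := Finset.card_le_card hsub
    rw [Nat.card_Icc] at this
    omega
  have hW := hS.two_mul_sgWeight_Kset Γ hΓ
  rw [hc] at hW
  have herase := Finset.sum_erase_add Γ (fun x : ℕ => (x : ℤ)) hF
  have hweight : sgWeight (Kset S) = ((Γ.card : ℤ) ^ 2 - 5 * (Γ.card : ℤ) + 10) / 2 ↔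
      ∑ x ∈ Γ.erase F, (x : ℤ) = (Γ.card : ℤ) ^ 2 - 4 * Γ.card + 6 := by
    have hpar : (2 : ℤ) ∣ (Γ.card : ℤ) ^ 2 - 5 * Γ.card + 10 := by
      obtain ⟨t, ht⟩ := Int.even_mul_succ_self (Γ.card : ℤ)
      exact ⟨t - 3 * Γ.card + 5, by linarith⟩
    obtain ⟨t, ht⟩ := hpar
    rw [ht, Int.mul_ediv_cancel_left _ (by norm_num)]
    push_cast at hW
    constructor <;> intro h <;> linarith
  rw [hweight]
  constructor
  · intro hsum
    have h3 : 3 ∉ S := fun h3 => by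
      have := hS.sum_lt_of_three_mem hΓ hFmax hgge h3
      linarith
    have h1 : 1 ∉ S := fun h => h2 (hS.2.1 _ h _ h)
    have hgap := hS.eq_biellipticGap_of_le_sum hΓ hF hFmax hgge h2 h3 (by
      zify
      linarith)
    have hmem : ∀ x, x = 4 ∨ x = 6 → x ∈ S := by
      intro x hx
      by_contra hxS
      have := hgap x (Finset.mem_erase.mpr ⟨by omega, (hΓ x).mpr hxS⟩)
      unfold biellipticGap at this
      split_ifs at this <;> omega
    have h4 := hmem 4 (by simp)
    have h6 := hmem 6 (by simp)
    refine ⟨h4, h6, h1, h2, h3, fun h5 => hFS ?_⟩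
    have hlarge : ∀ k, 8 + k ∈ S := by
      intro k
      induction k using Nat.strong_induction_on with
      | _ k ih =>
        rcases lt_or_ge k 4 with hk | hk
        · interval_cases k
          exacts [hS.2.1 _ h4 _ h4, hS.2.1 _ h4 _ h5, hS.2.1 _ h4 _ h6, hS.2.1 _ h5 _ h6]
        · rw [show 8 + k = 8 + (k - 4) + 4 by omega]
          exact hS.2.1 _ (ih _ (by omega)) _ h4
    simpa [show 8 + (F - 8) = F by omega] using hlarge (F - 8)
  · rintro ⟨h4, h6, -⟩
    exact hS.sum_erase_eq_of_four_mem_six_mem hΓ hF hFmax (by omega) h2 h4 h6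
end

section
/- Let S be a numerical semigroup of genus g ≥ 11 with 2 ∉ S, and let K = K(S). Then W_K ≤ (g² − 5g + 10)/2; moreover, if S is not bielliptic (i.e., it is not the case that 4 ∈ S, 6 ∈ S and 1, 2, 3, 5 ∉ S), then W_K < (g² − 5g + 10)/2. -/
section

open Finset

/-- The number of ordered pairs of elements of `G` with sum `x`. -/
def pairCount (G : Finset ℕ) (x : ℕ) : ℕ := #{a ∈ G | a ≤ x ∧ x - a ∈ G}

theorem sum_card_filter_le (G : Finset ℕ) :
    2 * ∑ x ∈ G, #{y ∈ G | y ≤ x} = #G * (#G + 1) := by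
  induction G using Finset.induction_on_max with
  | empty => simp
  | insert a s hlt ih =>
    have ha : a ∉ s := fun h => lt_irrefl _ (hlt a h)
    have htop : {y ∈ insert a s | y ≤ a} = insert a s := by
      apply filter_true_of_mem
      intro y hy
      rcases mem_insert.1 hy with rfl | hy
      · exact le_rfl
      · exact (hlt y hy).le
    have hrest : ∑ x ∈ s, #{y ∈ insert a s | y ≤ x} = ∑ x ∈ s, #{y ∈ s | y ≤ x} := by
      apply sum_congr rfl
      intro x hx
      rw [filter_insert, if_neg (not_le.2 (hlt x hx))]
    rw [sum_insert ha, htop, hrest, card_insert_of_notMem ha, mul_add, ih]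
    ring

/-- If the sum of two nonmembers of `G` is a nonmember, then a member `x` of `G` is determined by
its rank in `G` and by `pairCount G x`. -/
theorem add_one_add_pairCount {G : Finset ℕ}
    (hadd : ∀ a b, a ∉ G → b ∉ G → a + b ∉ G) {x : ℕ} (hx : x ∈ G) :
    x + 1 + pairCount G x = 2 * #{y ∈ G | y ≤ x} := by
  have hsplit : #{y ∈ range (x + 1) | y ∈ G} + #{y ∈ range (x + 1) | y ∉ G} = x + 1 := by
    rw [card_filter_add_card_filter_not, card_range]
  have hrank : {y ∈ range (x + 1) | y ∈ G} = {y ∈ G | y ≤ x} := by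
    ext y; simp only [mem_filter, mem_range]; constructor <;> rintro ⟨h, h'⟩ <;> constructor <;>
      first | assumption | omega
  have hrefl : #{y ∈ range (x + 1) | y ∉ G} = #{y ∈ {y ∈ G | y ≤ x} | x - y ∉ G} := by
    apply card_nbij' (fun y => x - y) (fun y => x - y)
    · intro y hy
      simp only [coe_filter, mem_filter, mem_range, Set.mem_ofPred_eq] at hy ⊢
      have hyx : x - (x - y) = y := by omega
      refine ⟨⟨?_, by omega⟩, by rw [hyx]; exact hy.2⟩
      by_contra h
      apply hadd _ _ hy.2 h
      rwa [show y + (x - y) = x by omega]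
    · intro y hy
      simp only [coe_filter, mem_filter, mem_range, Set.mem_ofPred_eq] at hy ⊢
      exact ⟨by omega, hy.2⟩
    · intro y hy
      simp only [coe_filter, mem_range, Set.mem_ofPred_eq] at hy
      show x - (x - y) = y
      omega
    · intro y hy
      simp only [coe_filter, mem_filter, Set.mem_ofPred_eq] at hy
      show x - (x - y) = y
      omega
  have hpair : #{y ∈ {y ∈ G | y ≤ x} | x - y ∈ G} + #{y ∈ {y ∈ G | y ≤ x} | x - y ∉ G}
      = #{y ∈ G | y ≤ x} := card_filter_add_card_filter_not _
  have hcount : pairCount G x = #{y ∈ {y ∈ G | y ≤ x} | x - y ∈ G} := by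
    rw [pairCount, filter_filter]
  rw [hrank] at hsplit
  omega

theorem two_le_pairCount {G : Finset ℕ} {a b : ℕ} (ha : a ∈ G) (hb : b ∈ G) (hab : a ≠ b) :
    2 ≤ pairCount G (a + b) := by
  rw [← card_pair hab]
  apply card_le_card
  intro y hy
  rw [mem_insert, mem_singleton] at hy
  rw [mem_filter]
  rcases hy with rfl | rfl
  · exact ⟨ha, by omega, by simpa using hb⟩
  · exact ⟨hb, by omega, by simpa using ha⟩

theorem one_le_pairCount {G : Finset ℕ} {a b : ℕ} (ha : a ∈ G) (hb : b ∈ G) :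
    1 ≤ pairCount G (a + b) :=
  card_pos.2 ⟨a, mem_filter.2 ⟨ha, by omega, by simpa using hb⟩⟩

/-- An element of the complement of `G` below `l` can be lowered by `m` until it becomes zero or
meets the exceptional element `l / 2 + m`. -/
theorem modEq_of_descent {G : Finset ℕ} {m l : ℕ} (hm : 0 < m)
    (hlt : ∀ i, 0 < i → i < m → i ∈ G)
    (hdesc : ∀ a, a ∉ G → m ≤ a → a ≤ l → a - m ∉ G ∨ 2 * a = l + 2 * m) (x : ℕ) :
    x ∉ G → x ≤ l → x ≡ 0 [MOD m] ∨ x ≡ l / 2 + m [MOD m] := by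
  induction x using Nat.strong_induction_on with
  | _ x ih =>
    intro hx hxl
    rcases lt_or_ge x m with h | h
    · rcases Nat.eq_zero_or_pos x with rfl | h0
      · exact Or.inl rfl
      · exact absurd (hlt x h0 h) hx
    · rcases hdesc x hx h hxl with h' | h'
      · have key : x - m ≡ x [MOD m] := (Nat.modEq_iff_dvd' (by omega)).2 ⟨1, by omega⟩
        rcases ih (x - m) (by omega) h' (by omega) with h1 | h1
        · exact Or.inl (key.symm.trans h1)
        · exact Or.inr (key.symm.trans h1)
      · right
        rw [show l / 2 + m = x by omega]

/-- In a numerical semigroup of multiplicity `m ≥ 4` with set of gaps `G`, every gap `l ≥ 3` other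
than the largest one is a sum of two gaps in at least two ways, unless `l = 2m - 2`. -/
theorem two_le_pairCount_or {G : Finset ℕ}
    (hadd : ∀ a b, a ∉ G → b ∉ G → a + b ∉ G) {m : ℕ} (hm : 4 ≤ m) (hmG : m ∉ G)
    (hlt : ∀ i, 0 < i → i < m → i ∈ G) {l : ℕ} (hl : l ∈ G) (hl3 : 3 ≤ l)
    (hnext : ∃ l' ∈ G, l < l') :
    2 ≤ pairCount G l ∨ (l + 2 = 2 * m ∧ ∀ i, m ≤ i → i + 3 ≤ 2 * m → i ∉ G) := by
  by_contra hcon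
  rw [not_or] at hcon
  obtain ⟨hcount, hexc⟩ := hcon
  have hpair : ∀ a b, a + b = l → a ∈ G → b ∈ G → a = b := by
    intro a b hab ha hb
    by_contra hne
    exact hcount (hab ▸ two_le_pairCount ha hb hne)
  rcases lt_or_ge l m with hlm | hlm
  · have := hpair 1 (l - 1) (by omega) (hlt _ (by omega) (by omega)) (hlt _ (by omega) (by omega))
    omega
  have hlm' : l ≠ m := fun h => hmG (h ▸ hl)
  rcases lt_or_ge (l + 2) (2 * m) with h1 | h1
  · have := hpair (m - 1) (l - (m - 1)) (by omega) (hlt _ (by omega) (by omega))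
      (hlt _ (by omega) (by omega))
    omega
  rcases h1.eq_or_lt with h1 | h1
  · apply hexc
    refine ⟨h1.symm, fun i hi hi' hiG => ?_⟩
    have := hpair i (l - i) (by omega) hiG (hlt _ (by omega) (by omega))
    omega
  have hbelow : ∀ i, 0 < i → i < m → l - i ∉ G := by
    intro i hi him h
    have := hpair i (l - i) (by omega) (hlt i hi him) h
    omega
  have hlmG : l + m ∈ G := by
    by_contra hlmG
    have hall : ∀ x, l < x → x ∉ G := by
      intro x
      induction x using Nat.strong_induction_on with
      | _ x ih =>
        intro hx
        rcases lt_trichotomy x (l + m) with h | h | h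
        · have := hadd _ _ (hbelow (l + m - x) (by omega) (by omega)) hmG
          rwa [show l - (l + m - x) + m = x by omega] at this
        · rwa [h]
        · have := hadd _ _ (ih (x - m) (by omega) (by omega)) hmG
          rwa [show x - m + m = x by omega] at this
    obtain ⟨l', hl', hll'⟩ := hnext
    exact hall l' hll' hl'
  have hdesc : ∀ a, a ∉ G → m ≤ a → a ≤ l → a - m ∉ G ∨ 2 * a = l + 2 * m := by
    intro a ha hma hal
    by_cases h : a - m ∈ G
    · right
      have hb : l + m - a ∈ G := by
        by_contra hb
        apply hadd _ _ ha hb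
        rwa [show a + (l + m - a) = l + m by omega]
      have := hpair (a - m) (l + m - a) (by omega) h hb
      omega
    · exact Or.inl h
  have hmod := modEq_of_descent (by omega) hlt hdesc
  have hincong : ∀ i j, i < j → j < 4 → ¬ l - j ≡ l - i [MOD m] := by
    intro i j hij hj h
    have hdvd := (Nat.modEq_iff_dvd' (by omega)).1 h
    have := Nat.le_of_dvd (by omega) hdvd
    omega
  have c1 := hmod _ (hbelow 1 (by omega) (by omega)) (by omega)
  have c2 := hmod _ (hbelow 2 (by omega) (by omega)) (by omega)
  have c3 := hmod _ (hbelow 3 (by omega) (by omega)) (by omega)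
  have n12 := hincong 1 2 (by omega) (by omega)
  have n13 := hincong 1 3 (by omega) (by omega)
  have n23 := hincong 2 3 (by omega) (by omega)
  rcases c1 with c1 | c1 <;> rcases c2 with c2 | c2 <;> rcases c3 with c3 | c3 <;>
    first
    | exact n12 (c2.trans c1.symm)
    | exact n13 (c3.trans c1.symm)
    | exact n23 (c3.trans c2.symm)

theorem card_le_of_forall_le {G : Finset ℕ} (h0 : 0 ∉ G) {k : ℕ} (h : ∀ x ∈ G, x ≤ k) :
    #G ≤ k := by
  calc #G ≤ #(Icc 1 k) := card_le_card fun x hx => by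
        rw [mem_Icc]
        refine ⟨Nat.pos_of_ne_zero ?_, h x hx⟩
        rintro rfl
        exact h0 hx
    _ = k := by simp

theorem notMem_of_window {G : Finset ℕ} (hadd : ∀ a b, a ∉ G → b ∉ G → a + b ∉ G)
    {m k : ℕ} (hm : 0 < m) (hmG : m ∉ G) (hwin : ∀ x, k ≤ x → x < k + m → x ∉ G) (x : ℕ) :
    k ≤ x → x ∉ G := by
  induction x using Nat.strong_induction_on with
  | _ x ih =>
    intro hx
    rcases lt_or_ge x (k + m) with h | h
    · exact hwin x hx h
    · have := hadd _ _ (ih (x - m) (by omega) (by omega)) hmG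
      rwa [show x - m + m = x by omega] at this

theorem sum_pairCount_lower_bound {G : Finset ℕ} (h0 : 0 ∉ G)
    (hadd : ∀ a b, a ∉ G → b ∉ G → a + b ∉ G) (hcard : 11 ≤ #G)
    (h1 : 1 ∈ G) (h2 : 2 ∈ G) (h3 : 3 ∈ G) {F : ℕ} (hF : F ∈ G) (hmax : ∀ x ∈ G, x ≤ F) :
    2 * (#G : ℤ) - 5 + (if 4 ∉ G ∧ 6 ∉ G then 0 else 1) ≤
      ∑ x ∈ G.erase F, (pairCount G x : ℤ) := by
  have hF11 : 11 ≤ F := hcard.trans (card_le_of_forall_le h0 hmax)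
  have hex : ∃ m, 0 < m ∧ m ∉ G := ⟨F + 1, by omega, fun h => by have := hmax _ h; omega⟩
  classical
  obtain ⟨m, ⟨hm0, hmG⟩, hmin⟩ : ∃ m, (0 < m ∧ m ∉ G) ∧ ∀ i, 0 < i → i < m → i ∈ G := by
    refine ⟨Nat.find hex, Nat.find_spec hex, fun i hi him => ?_⟩
    by_contra h
    exact Nat.find_min hex him ⟨hi, h⟩
  have hm4 : 4 ≤ m := by
    by_contra h
    interval_cases m <;> contradiction
  have hgen : ∀ x, x ∈ G.erase F → 3 ≤ x → 2 ≤ pairCount G x ∨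
      (x + 2 = 2 * m ∧ ∀ i, m ≤ i → i + 3 ≤ 2 * m → i ∉ G) := by
    intro x hx hx3
    obtain ⟨hxF, hxG⟩ := mem_erase.1 hx
    exact two_le_pairCount_or hadd hm4 hmG hmin hxG hx3
      ⟨F, hF, lt_of_le_of_ne (hmax x hxG) hxF⟩
  have hp2 : 1 ≤ pairCount G 2 := one_le_pairCount (a := 1) (b := 1) h1 h1
  have hc : (#(G.erase F) : ℤ) = #G - 1 := by
    rw [card_erase_of_mem hF]; push_cast [show 1 ≤ #G by omega]; ring
  have me : ∀ i, i < 11 → i ∈ G → i ∈ G.erase F := fun i hi h => mem_erase.2 ⟨by omega, h⟩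
  rcases hm4.eq_or_lt with rfl | hm5
  · have h5 : 5 ∈ G := by
      by_contra h5
      have hlarge : ∀ x, 12 ≤ x → x ∉ G := by
        have h8 := hadd _ _ hmG hmG
        have h10 := hadd _ _ h5 h5
        have h9 := hadd _ _ hmG h5
        apply notMem_of_window hadd hm0 hmG
        intro x hx hx'
        interval_cases x
        · exact hadd _ _ hmG h8
        · exact hadd _ _ hmG h9
        · exact hadd _ _ hmG h10
        · exact hadd _ _ h5 h10
      have hsub : G ⊆ (Icc 1 11).erase 4 := by
        intro x hx
        rw [mem_erase, mem_Icc]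
        refine ⟨fun h => hmG (h ▸ hx), Nat.pos_of_ne_zero fun h => h0 (h ▸ hx), ?_⟩
        by_contra hxl
        exact hlarge x (by omega) hx
      have := card_le_card hsub
      simp at this
      omega
    have hall : ∀ x ∈ G.erase F, 3 ≤ x → 2 ≤ pairCount G x := by
      intro x hx hx3
      rcases hgen x hx hx3 with h | ⟨-, h⟩
      · exact h
      · exact absurd h5 (h 5 (by omega) (by omega))
    have hp6 : 6 ∈ G → 3 ≤ pairCount G 6 := by
      intro h6
      have hsub : {1, 3, 5} ⊆ {a ∈ G | a ≤ 6 ∧ 6 - a ∈ G} := by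
        simp [insert_subset_iff, h1, h3, h5]
      exact card_le_card hsub
    have hbound : ∀ x ∈ G.erase F, (2 : ℤ) - (if x = 1 then 2 else 0) - (if x = 2 then 1 else 0)
        + (if x = 6 then 1 else 0) ≤ pairCount G x := by
      intro x hx
      have hx0 : x ≠ 0 := fun h => h0 (h ▸ mem_of_mem_erase hx)
      have h6 : x = 6 → 3 ≤ pairCount G x := by
        rintro rfl
        exact hp6 (mem_of_mem_erase hx)
      have h2' : x = 2 → 1 ≤ pairCount G x := by
        rintro rfl
        exact hp2
      have h3' := hall x hx
      split_ifs <;> omega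
    have hsum := sum_le_sum hbound
    rw [sum_add_distrib, sum_sub_distrib, sum_sub_distrib, sum_ite_eq', sum_ite_eq', sum_ite_eq',
      if_pos (me 1 (by omega) h1), if_pos (me 2 (by omega) h2), sum_const, nsmul_eq_mul, hc] at hsum
    by_cases h6 : 6 ∈ G
    · rw [if_pos (me 6 (by omega) h6)] at hsum
      rw [if_neg (by tauto)]
      linarith
    · rw [if_neg (fun h => h6 (mem_of_mem_erase h))] at hsum
      rw [if_pos ⟨hmG, h6⟩]
      linarith
  · have h4 : 4 ∈ G := hmin 4 (by omega) hm5
    rw [if_neg (by tauto)]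
    have hp4 : 3 ≤ pairCount G 4 := by
      have hsub : {1, 2, 3} ⊆ {a ∈ G | a ≤ 4 ∧ 4 - a ∈ G} := by
        simp [insert_subset_iff, h1, h2, h3]
      exact card_le_card hsub
    have hp5 : 5 ∈ G → 4 ≤ pairCount G 5 := by
      intro h5
      have hsub : {1, 2, 3, 4} ⊆ {a ∈ G | a ≤ 5 ∧ 5 - a ∈ G} := by
        simp [insert_subset_iff, h1, h2, h3, h4]
      exact card_le_card hsub
    have hexc : 5 ∉ G → ∀ x ∈ G.erase F, 3 ≤ x → 2 ≤ pairCount G x := by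
      intro h5 x hx hx3
      rcases hgen x hx hx3 with h | ⟨-, h⟩
      · exact h
      · exfalso
        have hm : m = 5 := by
          by_contra hne
          exact h5 (hmin 5 (by omega) (by omega))
        subst hm
        have h6 := h 6 (by omega) (by omega)
        have h7 := h 7 (by omega) (by omega)
        have hlarge : ∀ x, 10 ≤ x → x ∉ G := by
          apply notMem_of_window hadd hm0 hmG
          intro x hx hx'
          interval_cases x
          · exact hadd _ _ h5 h5
          · exact hadd _ _ h5 h6
          · exact hadd _ _ h6 h6
          · exact hadd _ _ h6 h7
          · exact hadd _ _ h7 h7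
        exact hlarge F (by omega) hF
    have hbound : ∀ x ∈ G.erase F, (2 : ℤ) - (if x = 1 then 2 else 0) - (if x = 2 then 1 else 0)
        + (if x = 4 then 1 else 0) + (if x = 5 then 1 else 0)
        - (if x = 2 * m - 2 then (if 5 ∈ G then 1 else 0) else 0) ≤ pairCount G x := by
      intro x hx
      have hxG := mem_of_mem_erase hx
      have hx0 : x ≠ 0 := fun h => h0 (h ▸ hxG)
      have h4' : x = 4 → 3 ≤ pairCount G x := by
        rintro rfl
        exact hp4
      have h5' : x = 5 → 4 ≤ pairCount G x := by
        rintro rfl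
        exact hp5 hxG
      have h2' : x = 2 → 1 ≤ pairCount G x := by
        rintro rfl
        exact hp2
      have hexc' : x = 2 * m - 2 → 1 ≤ pairCount G x := by
        intro h
        have hm1 : m - 1 ∈ G := hmin _ (by omega) (by omega)
        have := one_le_pairCount hm1 hm1
        rwa [show m - 1 + (m - 1) = x by omega] at this
      have h3' : 3 ≤ x → 2 ≤ pairCount G x ∨ x = 2 * m - 2 := fun hx3 =>
        (hgen x hx hx3).imp_right fun h => by omega
      by_cases h5 : 5 ∈ G
      · simp only [h5, if_true]
        split_ifs <;> omega
      · have h3'' := hexc h5 x hx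
        simp only [h5, if_false]
        split_ifs <;> omega
    have hsum := sum_le_sum hbound
    rw [sum_sub_distrib, sum_add_distrib, sum_add_distrib, sum_sub_distrib, sum_sub_distrib,
      sum_ite_eq', sum_ite_eq', sum_ite_eq', sum_ite_eq', sum_ite_eq',
      if_pos (me 1 (by omega) h1), if_pos (me 2 (by omega) h2), if_pos (me 4 (by omega) h4),
      sum_const, nsmul_eq_mul, hc] at hsum
    by_cases h5 : 5 ∈ G
    · rw [if_pos (me 5 (by omega) h5), if_pos h5] at hsum
      split_ifs at hsum <;> linarith
    · rw [if_neg (fun h => h5 (mem_of_mem_erase h)), if_neg h5] at hsum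
      split_ifs at hsum <;> linarith

/-- The sum of the gaps in terms of `pairCount` on the gaps other than the largest gap `F`. -/
theorem sum_add_sum_pairCount {G : Finset ℕ}
    (hadd : ∀ a b, a ∉ G → b ∉ G → a + b ∉ G) {F : ℕ} (hF : F ∈ G) (hmax : ∀ x ∈ G, x ≤ F) :
    (∑ x ∈ G, (x : ℤ)) + ∑ x ∈ G.erase F, (pairCount G x : ℤ) + 2 * #G
      = (#G : ℤ) ^ 2 + F + 1 := by
  have hsum : ∑ x ∈ G, (x + 1 + pairCount G x) = #G * (#G + 1) := by
    rw [sum_congr rfl fun x hx => add_one_add_pairCount hadd hx, ← mul_sum, sum_card_filter_le]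
  have hlast := add_one_add_pairCount hadd hF
  rw [filter_true_of_mem hmax] at hlast
  rw [sum_add_distrib, sum_add_distrib, ← add_sum_erase G (pairCount G) hF] at hsum
  zify at hsum hlast
  simp only [sum_const, nsmul_eq_mul, mul_one] at hsum
  linarith

/-- The set of gaps of a numerical semigroup of multiplicity three. -/
theorem exists_eq_union_of_three_notMem {G : Finset ℕ} (h0 : 0 ∉ G)
    (hadd : ∀ a b, a ∉ G → b ∉ G → a + b ∉ G) (h3 : 3 ∉ G) :
    ∃ p q : ℕ, q ≤ 2 * p ∧ p ≤ 2 * q + 1 ∧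
      (∀ x, x ∈ G ↔ (∃ k < p, 3 * k + 1 = x) ∨ ∃ k < q, 3 * k + 2 = x) := by
  have hmul : ∀ x k, x ∉ G → x + 3 * k ∉ G := by
    intro x k hx
    induction k with
    | zero => exact hx
    | succ k ih => exact hadd (x + 3 * k) 3 ih h3
  have hclass : ∀ r, ∃ p, ∀ k, 3 * k + r ∈ G ↔ k < p := by
    intro r
    have hex : ∃ k, 3 * k + r ∉ G := by
      obtain ⟨N, hN⟩ := G.bddAbove
      exact ⟨N + 1, fun h => by have := hN h; omega⟩
    classical
    refine ⟨Nat.find hex, fun k => ⟨fun h => ?_, fun h => not_not.1 (Nat.find_min hex h)⟩⟩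
    by_contra hk
    have := hmul _ (k - Nat.find hex) (Nat.find_spec hex)
    rw [show 3 * Nat.find hex + r + 3 * (k - Nat.find hex) = 3 * k + r by omega] at this
    exact this h
  obtain ⟨p, hp⟩ := hclass 1
  obtain ⟨q, hq⟩ := hclass 2
  have hp' : 3 * p + 1 ∉ G := fun h => lt_irrefl _ ((hp p).1 h)
  have hq' : 3 * q + 2 ∉ G := fun h => lt_irrefl _ ((hq q).1 h)
  refine ⟨p, q, ?_, ?_, fun x => ⟨fun hx => ?_, ?_⟩⟩
  · have := hadd _ _ hp' hp'
    rw [show 3 * p + 1 + (3 * p + 1) = 3 * (2 * p) + 2 by ring, hq] at this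
    omega
  · have := hadd _ _ hq' hq'
    rw [show 3 * q + 2 + (3 * q + 2) = 3 * (2 * q + 1) + 1 by ring, hp] at this
    omega
  · have hx0 : x % 3 ≠ 0 := by
      intro h
      have := hmul 0 (x / 3) h0
      rw [show 0 + 3 * (x / 3) = x by omega] at this
      exact this hx
    rcases (by omega : x = 3 * (x / 3) + 1 ∨ x = 3 * (x / 3) + 2) with h | h
    · exact Or.inl ⟨x / 3, (hp _).1 (h ▸ hx), h.symm⟩
    · exact Or.inr ⟨x / 3, (hq _).1 (h ▸ hx), h.symm⟩
  · rintro (⟨k, hk, rfl⟩ | ⟨k, hk, rfl⟩)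
    · exact (hp k).2 hk
    · exact (hq k).2 hk

theorem sum_gaps_lt_of_three_notMem {G : Finset ℕ} (h0 : 0 ∉ G)
    (hadd : ∀ a b, a ∉ G → b ∉ G → a + b ∉ G) (hcard : 11 ≤ #G) (h3 : 3 ∉ G)
    {F : ℕ} (hmax : ∀ x ∈ G, x ≤ F) :
    2 * (∑ x ∈ G, (x : ℤ)) + 8 * #G < 2 * (#G : ℤ) ^ 2 + 2 * F + 12 := by
  obtain ⟨p, q, hqp, hpq, hG⟩ := exists_eq_union_of_three_notMem h0 hadd h3
  have hGeq : G = (range p).image (fun k => 3 * k + 1) ∪ (range q).image (fun k => 3 * k + 2) := by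
    ext x
    simp [hG]
  have hdisj : Disjoint ((range p).image (fun k => 3 * k + 1))
      ((range q).image (fun k => 3 * k + 2)) := by
    rw [disjoint_left]
    intro x hx hx'
    simp only [mem_image, mem_range] at hx hx'
    omega
  have inj1 : Set.InjOn (fun k => 3 * k + 1) (range p : Set ℕ) := fun a _ b _ h => by
    simp only at h; omega
  have inj2 : Set.InjOn (fun k => 3 * k + 2) (range q : Set ℕ) := fun a _ b _ h => by
    simp only at h; omega
  have hc : #G = p + q := by
    rw [hGeq, card_union_of_disjoint hdisj, card_image_of_injOn inj1, card_image_of_injOn inj2,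
      card_range, card_range]
  have harith : ∀ (r : ℤ) (n : ℕ), 2 * ∑ k ∈ range n, (3 * (k : ℤ) + r)
      = 3 * n ^ 2 - 3 * n + 2 * r * n := by
    intro r n
    induction n with
    | zero => simp
    | succ n ih => rw [sum_range_succ, mul_add, ih]; push_cast; ring
  have hs : 2 * ∑ x ∈ G, (x : ℤ) = 3 * p ^ 2 - p + 3 * q ^ 2 + q := by
    rw [hGeq, sum_union hdisj, sum_image inj1, sum_image inj2]
    push_cast
    rw [mul_add, harith, harith]
    ring
  rw [hs, hc]
  rw [hc] at hcard
  push_cast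
  rcases le_or_gt p q with h | h
  · have hF : 3 * (q - 1) + 2 ≤ F := hmax _ ((hG _).2 (Or.inr ⟨q - 1, by omega, rfl⟩))
    have hF' : (3 * q : ℤ) ≤ F + 1 := by omega
    obtain ⟨t, rfl⟩ := Nat.exists_eq_add_of_le h
    have hp4 : (4 : ℤ) ≤ p := by omega
    have ht : (t : ℤ) ≤ p := by omega
    have hg : (11 : ℤ) ≤ 2 * p + t := by omega
    push_cast at *
    nlinarith [mul_nonneg (Int.natCast_nonneg t) (sub_nonneg.2 ht),
      mul_nonneg (sub_nonneg.2 hp4) (sub_nonneg.2 hg),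
      mul_nonneg (sub_nonneg.2 hp4) (sub_nonneg.2 hp4)]
  · have hF : 3 * (p - 1) + 1 ≤ F := hmax _ ((hG _).2 (Or.inl ⟨p - 1, by omega, rfl⟩))
    have hF' : (3 * p : ℤ) ≤ F + 2 := by omega
    obtain ⟨t, rfl⟩ := Nat.exists_eq_add_of_le h.le
    have hq4 : (4 : ℤ) ≤ q := by omega
    have ht : (t : ℤ) ≤ q + 1 := by omega
    have hg : (11 : ℤ) ≤ 2 * q + t := by omega
    push_cast at *
    nlinarith [mul_nonneg (Int.natCast_nonneg t) (sub_nonneg.2 ht),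
      mul_nonneg (sub_nonneg.2 hq4) (sub_nonneg.2 hg),
      mul_nonneg (sub_nonneg.2 hq4) (sub_nonneg.2 hq4)]

/-- The weight of `Kset S` in terms of the sum of the gaps of `S` and the largest gap. -/
theorem two_mul_sgWeight_Kset {S : Set ℕ} {G : Finset ℕ} (hG : ∀ x, x ∈ G ↔ x ∉ S) {F : ℕ}
    (hF : F ∈ G) (hmax : ∀ x ∈ G, x ≤ F) :
    2 * sgWeight (Kset S) = 2 * (∑ x ∈ G, (x : ℤ)) + 3 * #G - (#G : ℤ) ^ 2 - 2 * F - 2 := by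
  have hcond : sgConductor S = F + 1 := by
    apply le_antisymm
    · apply Nat.sInf_le
      intro n hn
      by_contra h
      have := hmax n ((hG n).2 h)
      omega
    · apply le_csInf
      · refine ⟨F + 1, fun n hn => ?_⟩
        by_contra h
        have := hmax n ((hG n).2 h)
        omega
      · intro c hc
        by_contra h
        exact (hG F).1 hF (hc F (by omega))
  have hsub : G ⊆ range (F + 1) := fun x hx => mem_range.2 (by have := hmax x hx; omega)
  have hcompl : (Kset S)ᶜ = ((range (F + 1) \ G).image (fun x => F - x) : Finset ℕ) := by
    ext a
    simp only [Kset, hcond, Set.mem_compl_iff, Set.mem_ofPred_eq, not_not, coe_image, Set.mem_image,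
      mem_coe, mem_sdiff, mem_range, hG]
    constructor
    · rintro ⟨s, hs, h⟩
      exact ⟨s, ⟨by omega, hs⟩, by omega⟩
    · rintro ⟨s, ⟨hsF, hs⟩, rfl⟩
      exact ⟨s, hs, by omega⟩
  have hinj : Set.InjOn (fun x => F - x) (range (F + 1) \ G : Finset ℕ) := by
    intro a ha b hb h
    simp only [mem_coe, mem_sdiff, mem_range] at ha hb h
    omega
  have hcard : #(range (F + 1) \ G) + #G = F + 1 := by
    rw [card_sdiff_add_card_eq_card hsub, card_range]
  have hgenus : sgGenus (Kset S) = #(range (F + 1) \ G) := by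
    rw [sgGenus, hcompl, Set.ncard_coe_finset, card_image_of_injOn hinj]
  have hgauss : ∀ n : ℕ, 2 * ∑ x ∈ range (n + 1), (x : ℤ) = n * (n + 1) := by
    intro n
    induction n with
    | zero => simp
    | succ n ih => rw [sum_range_succ, mul_add, ih]; push_cast; ring
  have hsum : ∑ᶠ x ∈ (Kset S)ᶜ, (x : ℤ)
      = #(range (F + 1) \ G) * F - ∑ x ∈ range (F + 1) \ G, (x : ℤ) := by
    rw [hcompl, finsum_mem_coe_finset, sum_image hinj, ← nsmul_eq_mul, ← sum_const,
      ← sum_sub_distrib]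
    apply sum_congr rfl
    intro x hx
    rw [mem_sdiff, mem_range] at hx
    omega
  have hsplit := sum_sdiff (f := fun x : ℕ => (x : ℤ)) hsub
  have hchoose : ∀ n : ℕ, 2 * ((n + 1).choose 2 : ℤ) = n * (n + 1) := by
    intro n
    induction n with
    | zero => simp
    | succ n ih =>
      rw [Nat.choose_succ_succ' (n + 1) 1, Nat.choose_one_right]
      push_cast at ih ⊢
      linarith
  have hc := hchoose #(range (F + 1) \ G)
  have hF2 := hgauss F
  rw [← hsplit] at hF2
  rw [sgWeight, hgenus, hsum, mul_sub, hc]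
  have hcard' : (#(range (F + 1) \ G) : ℤ) = F + 1 - #G := by omega
  rw [hcard']
  linarith

end

/-- for a numerical semigroup of genus `g ≥ 11` with `2 ∉ S`,
`W_K ≤ (g²−5g+10)/2`; moreover if `S` is not bielliptic then the inequality is strict. -/
theorem weight_Kset_submaximal_bound (S : Set ℕ) (hS : IsNumericalSemigroup S)
    (g : ℕ) (hg : sgGenus S = g) (hgge : 11 ≤ g) (h2 : 2 ∉ S) :
    sgWeight (Kset S) ≤ ((g : ℤ) ^ 2 - 5 * (g : ℤ) + 10) / 2 ∧
      (¬ (4 ∈ S ∧ 6 ∈ S ∧ 1 ∉ S ∧ 2 ∉ S ∧ 3 ∉ S ∧ 5 ∉ S) →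
        sgWeight (Kset S) < ((g : ℤ) ^ 2 - 5 * (g : ℤ) + 10) / 2) := by
  obtain ⟨h0S, haddS, hfin⟩ := hS
  have hG : ∀ x, x ∈ hfin.toFinset ↔ x ∉ S := fun x => by simp
  have hcard : hfin.toFinset.card = g := by
    rw [← hg, sgGenus, Set.ncard_eq_toFinset_card _ hfin]
  generalize hfin.toFinset = G at hG hcard
  have hS' : ∀ x, x ∉ G ↔ x ∈ S := fun x => by rw [hG, not_not]
  have h0 : 0 ∉ G := (hS' 0).2 h0S
  have hadd : ∀ a b, a ∉ G → b ∉ G → a + b ∉ G := by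
    simp only [hS']
    exact fun a b ha hb => haddS a ha b hb
  have hcard11 : 11 ≤ G.card := hcard ▸ hgge
  have h2G : 2 ∈ G := (hG 2).2 h2
  have h1G : 1 ∈ G := by
    by_contra h
    exact hadd 1 1 h h h2G
  have hne : G.Nonempty := ⟨2, h2G⟩
  obtain ⟨F, hF, hmax⟩ : ∃ F ∈ G, ∀ x ∈ G, x ≤ F :=
    ⟨G.max' hne, G.max'_mem hne, fun x hx => G.le_max' x hx⟩
  have hW := two_mul_sgWeight_Kset hG hF hmax
  by_cases h3 : 3 ∈ G
  · have hbound := sum_pairCount_lower_bound h0 hadd hcard11 h1G h2G h3 hF hmax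
    have hsum := sum_add_sum_pairCount hadd hF hmax
    rw [hcard] at hW hbound hsum
    refine ⟨?_, fun hnot => ?_⟩
    · split_ifs at hbound <;> omega
    · rw [if_neg] at hbound
      · omega
      rintro ⟨h4, h6⟩
      apply hnot
      refine ⟨(hS' 4).1 h4, (hS' 6).1 h6, (hG 1).1 h1G, h2, (hG 3).1 h3, (hG 5).1 ?_⟩
      by_contra h5
      have hlarge : ∀ x, 8 ≤ x → x ∉ G := by
        apply notMem_of_window hadd (by omega) h4
        intro x hx hx'
        interval_cases x
        · exact hadd _ _ h4 h4
        · exact hadd _ _ h4 h5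
        · exact hadd _ _ h4 h6
        · exact hadd _ _ h5 h6
      have := card_le_of_forall_le h0 (k := 7) fun x hx => by
        by_contra h
        exact hlarge x (by omega) hx
      omega
  · have hbound := sum_gaps_lt_of_three_notMem h0 hadd hcard11 h3 hmax
    rw [hcard] at hW hbound
    constructor
    · omega
    · intro _
      omega
end

section
/- For every natural number κ there exists a natural number g₀ such that the following holds: if S is a κ-hyperelliptic numerical semigroup of genus g ≥ g₀ with gaps ℓ_1 < … < ℓ_g, and if every odd element of S ∩ {1, …, 2g} is strictly larger than the next-to-largest gap ℓ_{g−1}, then binomial(g−2κ, 2) + 2κ ≤ W_{K(S)} ≤ binomial(g−2κ, 2) + 2κ². -/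
/-- The largest gap `ℓ_g` of `S`. -/
noncomputable def largestGap (S : Set ℕ) : ℕ := sSup (Sᶜ : Set ℕ)

/-- The next-to-largest gap `ℓ_{g−1}` of `S`. -/
noncomputable def secondLargestGap (S : Set ℕ) : ℕ :=
  sSup ((Sᶜ : Set ℕ) \ {largestGap S})

open Finset

open scoped Classical in
/-- Pairing `a` with `n - a` shows that about half of the positive integers below a gap `n`
are themselves gaps. -/
theorem le_two_mul_card_gaps_below {T : Set ℕ} (hadd : ∀ a ∈ T, ∀ b ∈ T, a + b ∈ T)
    {n : ℕ} (hn : n ∉ T) : n ≤ 2 * #{x ∈ Ioo 0 n | x ∉ T} + 1 := by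
  have hle : #{x ∈ Ioo 0 n | x ∈ T} ≤ #{x ∈ Ioo 0 n | x ∉ T} := by
    refine card_le_card_of_injOn (fun x => n - x) ?_ ?_
    · intro x hx
      simp only [coe_filter, mem_Ioo, Set.mem_ofPred_eq] at hx ⊢
      refine ⟨by omega, fun h => hn ?_⟩
      have := hadd _ h _ hx.2
      rwa [Nat.sub_add_cancel (by omega)] at this
    · intro x hx y hy hxy
      simp only [coe_filter, mem_Ioo, Set.mem_ofPred_eq] at hx hy hxy
      omega
  have hcard := card_filter_add_card_filter_not (s := Ioo 0 n) (fun x => x ∈ T)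
  rw [Nat.card_Ioo] at hcard
  omega

theorem card_mul_succ_le_two_mul_sum (A : Finset ℕ) (hA : ∀ a ∈ A, 1 ≤ a) :
    #A * (#A + 1) ≤ 2 * ∑ a ∈ A, a := by
  induction A using Finset.induction_on_max with
  | empty => simp
  | insert m s hm ih =>
    have hms : m ∉ s := fun h => lt_irrefl _ (hm m h)
    have hs : #s + 1 ≤ m := by
      have hsub : s ⊆ Ico 1 m := fun x hx =>
        mem_Ico.2 ⟨hA x (mem_insert_of_mem hx), hm x hx⟩
      have := card_le_card hsub
      have := hA m (mem_insert_self _ _)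
      simp at *
      omega
    have := ih fun a ha => hA a (mem_insert_of_mem ha)
    rw [sum_insert hms, card_insert_of_notMem hms]
    nlinarith

theorem two_mul_sum_le_of_lt_two_mul_card (A : Finset ℕ) (hA : ∀ a ∈ A, a < 2 * #A) :
    2 * ∑ a ∈ A, a + #A ≤ 3 * #A ^ 2 := by
  have hinj : Set.InjOn (fun a => 2 * #A - a) (A : Set ℕ) := by
    intro a ha b hb hab
    have := hA a ha
    have := hA b hb
    simp only at hab
    omega
  have hle := card_mul_succ_le_two_mul_sum (A.image fun a => 2 * #A - a) (by
    intro b hb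
    obtain ⟨a, ha, rfl⟩ := mem_image.1 hb
    have := hA a ha
    omega)
  rw [card_image_of_injOn hinj, sum_image hinj] at hle
  have hsum : ∑ a ∈ A, (2 * #A - a) + ∑ a ∈ A, a = #A * (2 * #A) := by
    rw [← sum_add_distrib, ← smul_eq_mul (#A), ← sum_const]
    exact sum_congr rfl fun a ha => Nat.sub_add_cancel (hA a ha).le
  nlinarith

open scoped Classical in
/-- An additively closed set with exactly `κ` elements in `[1, 2κ]` which contains `2κ + 1`
contains every positive integer from `2κ` on. -/
theorem mem_of_two_mul_le {T : Set ℕ} (hadd : ∀ a ∈ T, ∀ b ∈ T, a + b ∈ T) {κ : ℕ}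
    (hcard : #{x ∈ Icc 1 (2 * κ) | x ∈ T} = κ) (hmem : 2 * κ + 1 ∈ T) (n : ℕ) (hpos : 1 ≤ n)
    (hn : 2 * κ ≤ n) : n ∈ T := by
  have hgaps : #{x ∈ Icc 1 (2 * κ) | x ∉ T} = κ := by
    have := card_filter_add_card_filter_not (s := Icc 1 (2 * κ)) (fun x => x ∈ T)
    rw [Nat.card_Icc] at this
    omega
  induction n using Nat.strong_induction_on with
  | _ n ih =>
    by_contra hnT
    have hle := le_two_mul_card_gaps_below hadd hnT
    have hsub : {x ∈ Ioo 0 n | x ∉ T} ⊆ ({x ∈ Icc 1 (2 * κ) | x ∉ T}).erase n := by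
      intro x hx
      simp only [mem_filter, mem_Ioo, mem_erase, mem_Icc] at hx ⊢
      refine ⟨by omega, ⟨by omega, ?_⟩, hx.2⟩
      by_contra hlt
      exact hx.2 (ih x hx.1.2 hx.1.1 (by omega))
    have hsub_card := card_le_card hsub
    rcases eq_or_ne n (2 * κ + 1) with rfl | hne
    · exact hnT hmem
    by_cases hlast : n = 2 * κ
    · rw [card_erase_of_mem (by simp [hnT, hpos, hlast.le]), hgaps] at hsub_card
      omega
    · have := card_erase_le (s := {x ∈ Icc 1 (2 * κ) | x ∉ T}) (a := n)
      omega

theorem isGreatest_largestGap {S : Set ℕ} (hfin : (Sᶜ : Set ℕ).Finite)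
    (hne : (Sᶜ : Set ℕ).Nonempty) : IsGreatest (Sᶜ : Set ℕ) (largestGap S) :=
  ⟨Nat.sSup_mem hne hfin.bddAbove, fun _ hx => le_csSup hfin.bddAbove hx⟩

theorem sgConductor_eq_largestGap_add_one {S : Set ℕ} (hfin : (Sᶜ : Set ℕ).Finite)
    (hne : (Sᶜ : Set ℕ).Nonempty) : sgConductor S = largestGap S + 1 := by
  have hgreat := isGreatest_largestGap hfin hne
  have hcond : ∀ n, largestGap S + 1 ≤ n → n ∈ S := by
    intro n hn
    by_contra h
    have := hgreat.2 h
    omega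
  refine le_antisymm (Nat.sInf_le hcond) ?_
  refine le_csInf ⟨_, hcond⟩ fun c hc => ?_
  by_contra hlt
  exact hgreat.1 (hc _ (by omega))

open scoped Classical in
/-- The weight of `K(S)` in terms of the genus and the sum of the gaps of `S`: the largest gap
cancels out. -/
theorem two_mul_sgWeight_Kset_s16 {S : Set ℕ} (hfin : (Sᶜ : Set ℕ).Finite)
    (hne : (Sᶜ : Set ℕ).Nonempty) :
    2 * sgWeight (Kset S) =
      2 * ((∑ x ∈ hfin.toFinset, x : ℕ) : ℤ) - 2 * largestGap S
        - ((sgGenus S : ℤ) - 1) * ((sgGenus S : ℤ) - 2) := by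
  have hgreat := isGreatest_largestGap hfin hne
  set f := largestGap S with hf
  have hg : sgGenus S = #hfin.toFinset := Set.ncard_eq_toFinset_card _ hfin
  have hgaps : {x ∈ range (f + 1) | x ∉ S} = hfin.toFinset := by
    ext x
    simp only [mem_filter, mem_range, Set.Finite.mem_toFinset, Set.mem_compl_iff,
      and_iff_right_iff_imp]
    intro hx
    have := hgreat.2 hx
    omega
  have hinj : Set.InjOn (fun s => f - s) (({x ∈ range (f + 1) | x ∈ S} : Finset ℕ) : Set ℕ) := by
    intro a ha b hb hab
    simp only [coe_filter, mem_range, Set.mem_ofPred_eq] at ha hb hab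
    omega
  have hK : ((Kset S)ᶜ : Set ℕ) =
      (({x ∈ range (f + 1) | x ∈ S}).image (fun s => f - s) : Finset ℕ) := by
    ext a
    simp only [Kset, sgConductor_eq_largestGap_add_one hfin hne, Set.mem_compl_iff,
      Set.mem_ofPred_eq, not_not, coe_image, Set.mem_image, coe_filter, mem_range, ← hf]
    constructor
    · rintro ⟨s, hs, h⟩
      push_cast at h
      exact ⟨s, ⟨by omega, hs⟩, by omega⟩
    · rintro ⟨s, ⟨hlt, hs⟩, h⟩
      exact ⟨s, hs, by push_cast; omega⟩
  have hcard : #{x ∈ range (f + 1) | x ∈ S} + sgGenus S = f + 1 := by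
    rw [hg, ← hgaps, card_filter_add_card_filter_not, card_range]
  have hgenus : sgGenus (Kset S) = #{x ∈ range (f + 1) | x ∈ S} := by
    rw [sgGenus, hK, Set.ncard_coe_finset, card_image_of_injOn hinj]
  have hsum : ∑ᶠ x ∈ ((Kset S)ᶜ : Set ℕ), (x : ℤ) =
      ∑ s ∈ range (f + 1) with s ∈ S, ((f : ℤ) - s) := by
    rw [hK, finsum_mem_coe_finset, sum_image hinj]
    refine sum_congr rfl fun s hs => ?_
    simp only [mem_filter, mem_range] at hs
    rw [Nat.cast_sub (by omega)]
  have hsplit := sum_filter_add_sum_filter_not (range (f + 1)) (fun s => s ∈ S)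
    (fun s => (f : ℤ) - s)
  have hgapsum : ∑ s ∈ range (f + 1) with s ∉ S, ((f : ℤ) - s) =
      sgGenus S * f - ((∑ x ∈ hfin.toFinset, x : ℕ) : ℤ) := by
    rw [hgaps, sum_sub_distrib, sum_const, hg, nsmul_eq_mul]
    push_cast
    rfl
  have htotal : 2 * ∑ s ∈ range (f + 1), ((f : ℤ) - s) = f * (f + 1) := by
    have h := sum_range_id_mul_two (f + 1)
    rw [Nat.add_sub_cancel] at h
    rw [sum_sub_distrib, sum_const, card_range, nsmul_eq_mul, ← Nat.cast_sum]
    zify at h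
    push_cast at h ⊢
    linarith
  have hchoose : 2 * ((#{x ∈ range (f + 1) | x ∈ S} + 1).choose 2 : ℤ) =
      (#{x ∈ range (f + 1) | x ∈ S} + 1) * #{x ∈ range (f + 1) | x ∈ S} := by
    have h := Nat.add_one_mul_choose_eq #{x ∈ range (f + 1) | x ∈ S} 1
    rw [Nat.choose_one_right] at h
    push_cast [← Nat.cast_inj (R := ℤ)] at h
    linarith
  rw [sgWeight, hgenus, hsum]
  have hn : (#{x ∈ range (f + 1) | x ∈ S} : ℤ) = f + 1 - sgGenus S := by
    have : (#{x ∈ range (f + 1) | x ∈ S} : ℤ) + sgGenus S = f + 1 := by exact_mod_cast hcard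
    linarith
  rw [hn] at hchoose
  rw [mul_sub, hchoose]
  linear_combination 2 * hsplit - 2 * hgapsum + htotal

theorem sum_filter_odd_range (n : ℕ) :
    ∑ x ∈ range n with Odd x, x = #{x ∈ range n | Odd x} ^ 2 := by
  have h : {x ∈ range n | Odd x} = (range (n / 2)).image (fun i => 2 * i + 1) := by
    ext x
    simp only [mem_filter, mem_range, mem_image]
    constructor
    · rintro ⟨hx, k, rfl⟩
      exact ⟨k, by omega, rfl⟩
    · rintro ⟨k, hk, rfl⟩
      exact ⟨by omega, k, rfl⟩
  have hinj : Set.InjOn (fun i : ℕ => 2 * i + 1) (range (n / 2) : Set ℕ) :=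
    fun a _ b _ hab => by simpa using hab
  rw [h, sum_image hinj, card_image_of_injOn hinj, card_range]
  induction n / 2 with
  | zero => simp
  | succ k ih => rw [sum_range_succ, ih]; ring

/-- If the odd elements of `S` up to `2g` exceed the next-to-largest gap and the largest gap is
odd, the odd gaps are consecutive odd numbers together with the largest gap. -/
theorem sum_odd_gaps {S : Set ℕ} (hS : IsNumericalSemigroup S) (hg : 2 ≤ sgGenus S)
    (hodd : Odd (largestGap S))
    (hsecond : ∀ s ∈ S, Odd s → 1 ≤ s → s ≤ 2 * sgGenus S → secondLargestGap S < s) :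
    ∑ x ∈ hS.2.2.toFinset with Odd x, x =
      (#{x ∈ hS.2.2.toFinset | Odd x} - 1) ^ 2 + largestGap S := by
  classical
  obtain ⟨h0, hadd, hfin⟩ := hS
  have hcard : sgGenus S = #hfin.toFinset := Set.ncard_eq_toFinset_card _ hfin
  have hne : (Sᶜ : Set ℕ).Nonempty := by
    rw [← hfin.toFinset_nonempty, ← card_pos]
    omega
  have hgreat := isGreatest_largestGap hfin hne
  have hfin' : ((Sᶜ : Set ℕ) \ {largestGap S}).Finite := hfin.subset Set.sdiff_subset
  have hne' : ((Sᶜ : Set ℕ) \ {largestGap S}).Nonempty := by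
    have : (hfin.toFinset.erase (largestGap S)).Nonempty := by
      rw [← card_pos, card_erase_of_mem (by simpa using hgreat.1)]
      omega
    obtain ⟨x, hx⟩ := this
    rw [mem_erase, hfin.mem_toFinset] at hx
    exact ⟨x, hx.2, hx.1⟩
  have hmem : secondLargestGap S ∈ (Sᶜ : Set ℕ) \ {largestGap S} :=
    Nat.sSup_mem hne' hfin'.bddAbove
  have hlt : secondLargestGap S < largestGap S := lt_of_le_of_ne (hgreat.2 hmem.1) hmem.2
  have hbound : largestGap S ≤ 2 * sgGenus S := by
    have h := le_two_mul_card_gaps_below hadd hgreat.1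
    have hsub : {x ∈ Ioo 0 (largestGap S) | x ∉ S} ⊆ hfin.toFinset.erase (largestGap S) := by
      intro x hx
      simp only [mem_filter, mem_Ioo, mem_erase, hfin.mem_toFinset] at hx ⊢
      exact ⟨by omega, hx.2⟩
    have := card_le_card hsub
    rw [card_erase_of_mem (by simpa using hgreat.1)] at this
    omega
  have hfmem : largestGap S ∈ ({x ∈ hfin.toFinset | Odd x}) := by
    simpa [hodd] using hgreat.1
  have herase : ({x ∈ hfin.toFinset | Odd x}).erase (largestGap S) =
      {x ∈ range (secondLargestGap S + 1) | Odd x} := by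
    ext x
    simp only [mem_erase, mem_filter, hfin.mem_toFinset, mem_range]
    constructor
    · rintro ⟨hx, hxS, hxo⟩
      exact ⟨Nat.lt_succ_of_le (le_csSup hfin'.bddAbove ⟨hxS, hx⟩), hxo⟩
    · rintro ⟨hx, hxo⟩
      refine ⟨by omega, fun hxS => ?_, hxo⟩
      have := hsecond x hxS hxo hxo.pos (by omega)
      omega
  rw [← sum_erase_add _ _ hfmem, ← card_erase_of_mem hfmem, herase, sum_filter_odd_range]

/-- for every `κ` there is `g₀` such that every `κ`-hyperelliptic
numerical semigroup of genus `g ≥ g₀`, all of whose odd elements in `{1,…,2g}` exceed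
the next-to-largest gap `ℓ_{g−1}`, satisfies
`binomial(g−2κ,2) + 2κ ≤ W_{K(S)} ≤ binomial(g−2κ,2) + 2κ²`. -/
theorem kappa_hyperelliptic_weight_bounds (κ : ℕ) :
    ∃ g₀ : ℕ, ∀ S : Set ℕ, IsNumericalSemigroup S → g₀ ≤ sgGenus S →
      ({n : ℕ | n ∈ S ∧ Even n ∧ 2 ≤ n ∧ n ≤ 4 * κ}).ncard = κ →
      4 * κ + 2 ∈ S →
      (∀ s ∈ S, Odd s → 1 ≤ s → s ≤ 2 * sgGenus S → secondLargestGap S < s) →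
      ((sgGenus S - 2 * κ).choose 2 : ℤ) + 2 * (κ : ℤ) ≤ sgWeight (Kset S) ∧
        sgWeight (Kset S) ≤ ((sgGenus S - 2 * κ).choose 2 : ℤ) + 2 * (κ : ℤ) ^ 2 := by
  classical
  refine ⟨4 * κ + 2, fun S hS hg heven hmem hsecond => ?_⟩
  have hcard : sgGenus S = #hS.2.2.toFinset := Set.ncard_eq_toFinset_card _ hS.2.2
  have hne : (Sᶜ : Set ℕ).Nonempty := by
    rw [← hS.2.2.toFinset_nonempty, ← card_pos]
    omega
  have hgreat := isGreatest_largestGap hS.2.2 hne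
  -- `T` consists of the halves of the even elements of `S`.
  let T : Set ℕ := {n | 2 * n ∈ S}
  have hTadd : ∀ a ∈ T, ∀ b ∈ T, a + b ∈ T := by
    intro a ha b hb
    change 2 * (a + b) ∈ S
    rw [mul_add]
    exact hS.2.1 _ ha _ hb
  have hdouble : Function.Injective (fun n : ℕ => 2 * n) := fun a b h => by simpa using h
  have hTcard : #{x ∈ Icc 1 (2 * κ) | x ∈ T} = κ := by
    rw [← card_image_of_injective _ hdouble, ← Set.ncard_coe_finset]
    convert heven using 2
    ext n
    simp only [coe_image, Set.mem_image, coe_filter, mem_Icc, Set.mem_ofPred_eq, T]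
    constructor
    · rintro ⟨x, ⟨hx, hxS⟩, rfl⟩
      exact ⟨hxS, even_two_mul x, by omega, by omega⟩
    · rintro ⟨hnS, hne, h1, h2⟩
      obtain ⟨x, rfl⟩ := hne.two_dvd
      exact ⟨x, ⟨by omega, hnS⟩, rfl⟩
  have hTmem : ∀ n, 1 ≤ n → 2 * κ ≤ n → n ∈ T :=
    mem_of_two_mul_le hTadd hTcard (by change 2 * (2 * κ + 1) ∈ S; convert hmem using 1; ring)
  set A : Finset ℕ := {x ∈ Icc 1 (2 * κ) | x ∉ T} with hA
  have hAcard : #A = κ := by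
    have := card_filter_add_card_filter_not (s := Icc 1 (2 * κ)) (fun x => x ∈ T)
    rw [hTcard, Nat.card_Icc] at this
    have hsum : κ + #A = 2 * κ + 1 - 1 := by convert this
    omega
  have hApos : ∀ a ∈ A, 1 ≤ a := fun a ha => (mem_Icc.1 (mem_filter.1 ha).1).1
  have hAlt : ∀ a ∈ A, a < 2 * #A := by
    intro a ha
    by_contra h
    exact (mem_filter.1 ha).2 (hTmem a (hApos a ha) (by omega))
  have hevenGaps : {x ∈ hS.2.2.toFinset | ¬ Odd x} = A.image (fun n => 2 * n) := by
    ext x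
    simp only [mem_filter, Set.Finite.mem_toFinset, Set.mem_compl_iff, Nat.not_odd_iff_even,
      mem_image]
    constructor
    · rintro ⟨hxS, hxe⟩
      obtain ⟨y, rfl⟩ := hxe.two_dvd
      have hy : 1 ≤ y := by
        by_contra h
        obtain rfl : y = 0 := by omega
        exact hxS hS.1
      refine ⟨y, mem_filter.2 ⟨mem_Icc.2 ⟨hy, ?_⟩, hxS⟩, rfl⟩
      by_contra h
      exact hxS (hTmem y hy (by omega))
    · rintro ⟨y, hy, rfl⟩
      exact ⟨(mem_filter.1 hy).2, even_two_mul y⟩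
  have hodd : Odd (largestGap S) := by
    by_contra h
    have hmemE : largestGap S ∈ {x ∈ hS.2.2.toFinset | ¬ Odd x} := by
      simpa [Nat.not_odd_iff_even.1 h] using hgreat.1
    rw [hevenGaps] at hmemE
    obtain ⟨a, ha, hfa⟩ := mem_image.1 hmemE
    have hlt := hAlt a ha
    have hsub : hS.2.2.toFinset ⊆ range (4 * κ) := by
      intro x hx
      have := hgreat.2 (hS.2.2.mem_toFinset.1 hx)
      simp only [mem_range]
      omega
    have := card_le_card hsub
    rw [card_range] at this
    omega
  have hevenCard : #{x ∈ hS.2.2.toFinset | ¬ Odd x} = κ := by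
    rw [hevenGaps, card_image_of_injective _ hdouble, hAcard]
  have hevenSum : ∑ x ∈ hS.2.2.toFinset with ¬ Odd x, x = 2 * ∑ a ∈ A, a := by
    rw [hevenGaps, sum_image hdouble.injOn, mul_sum]
  have hoddCard := card_filter_add_card_filter_not (s := hS.2.2.toFinset) (fun x => Odd x)
  have hsum := sum_filter_add_sum_filter_not hS.2.2.toFinset (fun x => Odd x) (fun x => x)
  rw [sum_odd_gaps hS (by omega) hodd hsecond, hevenSum] at hsum
  have hweight := two_mul_sgWeight_Kset_s16 hS.2.2 hne
  obtain ⟨p, hp⟩ : ∃ p, sgGenus S = p + 2 * κ + 1 := ⟨sgGenus S - 2 * κ - 1, by omega⟩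
  rw [show #{x ∈ hS.2.2.toFinset | Odd x} - 1 = p + κ by omega] at hsum
  rw [← hsum, hp] at hweight
  have hchoose := Nat.add_one_mul_choose_eq p 1
  rw [Nat.choose_one_right] at hchoose
  rw [show sgGenus S - 2 * κ = p + 1 by omega]
  have hlow := card_mul_succ_le_two_mul_sum A hApos
  have hupp := two_mul_sum_le_of_lt_two_mul_card A hAlt
  rw [hAcard] at hlow hupp
  zify at hchoose hlow hupp
  push_cast at hweight
  constructor <;> nlinarith
end
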